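/- For every real β with 0 < β < 3π/√24, there exists an integer N such that for all integers n > N, (p(n)^{1/n} / p(n+1)^{1/(n+1)}) · (1 + β/n^{5/2}) < p(n-1)^{1/(n-1)} / p(n)^{1/n}. In particular, the constant 3π/√24 in the inequality (p(n)^{1/n}/p(n+1)^{1/(n+1)})·(1 + 3π/(√24·n^{5/2})) > p(n-1)^{1/(n-1)}/p(n)^{1/n} is best possible. -/

import Mathlib

open Real

/-- The partition function, as a real number. -/
noncomputable def p (n : ℕ) : ℝ := (Fintype.card (Nat.Partition n) : ℝ)

open Filter Topology MeasureTheory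

section GeneratingFunction

open PowerSeries PowerSeries.WithPiTopology

/-- The number of partitions of `n` into parts of size at most `K`. -/
def boundedPartitions (K n : ℕ) : ℕ := (Nat.Partition.restricted n (· ≤ K)).card

lemma boundedPartitions_le_p (K n : ℕ) : (boundedPartitions K n : ℝ) ≤ p n := by
  unfold boundedPartitions p
  exact_mod_cast Finset.card_le_univ _

lemma boundedPartitions_eq_p {K n : ℕ} (h : n ≤ K) : (boundedPartitions K n : ℝ) = p n := by
  unfold boundedPartitions p
  rw [← Finset.card_univ]
  congr 2
  ext q
  simp only [Nat.Partition.restricted, Finset.mem_filter, Finset.mem_univ, true_and, iff_true]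
  intro i hi
  have := Multiset.single_le_sum (fun x _ => Nat.zero_le x) i hi
  rw [q.parts_sum] at this
  omega

lemma tsum_X_pow_mul_eq_mk {𝕜 : Type*} [RCLike 𝕜] (k : ℕ) (hk : 0 < k) :
    ∑' j : ℕ, (X : 𝕜⟦X⟧) ^ (k * j) = PowerSeries.mk fun n => if k ∣ n then (1 : 𝕜) else 0 := by
  have h1 : (∑' j : ℕ, (X : 𝕜⟦X⟧) ^ (k * j)) * (1 - X ^ k) = 1 := by
    simp_rw [pow_mul]
    exact tsum_pow_mul_one_sub_of_constantCoeff_eq_zero (by simp [hk.ne'])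
  have h2 : (PowerSeries.mk fun n => if k ∣ n then (1 : 𝕜) else 0) * (1 - X ^ k) = 1 := by
    ext n
    rw [mul_sub, mul_one, map_sub, coeff_mul_X_pow', coeff_mk, coeff_one]
    rcases Nat.eq_zero_or_pos n with rfl | hn
    · simp [hk.ne']
    · by_cases hkn : k ≤ n
      · have : k ∣ n - k ↔ k ∣ n := (Nat.dvd_sub_iff_left hkn dvd_rfl)
        simp only [hkn, hn.ne', this, coeff_mk, if_true, if_false, sub_self]
      · have : ¬ k ∣ n := fun h => hkn (Nat.le_of_dvd hn h)
        simp [hkn, hn.ne', this]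
  have h3 : (1 - X ^ k : 𝕜⟦X⟧) ≠ 0 := fun h => by rw [h] at h1; simp at h1
  exact mul_right_cancel₀ h3 (h1.trans h2.symm)

lemma mk_boundedPartitions {𝕜 : Type*} [RCLike 𝕜] (K : ℕ) :
    (PowerSeries.mk fun n => (boundedPartitions K n : 𝕜)) =
      ∏ i ∈ Finset.range K, PowerSeries.mk fun n => if (i + 1) ∣ n then (1 : 𝕜) else 0 := by
  have h := Nat.Partition.hasProd_powerSeriesMk_card_restricted 𝕜 (· ≤ K)
  have h' := hasProd_prod_of_ne_finset_one (L := .unconditional ℕ)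
    (f := fun i ↦ if i + 1 ≤ K then ∑' j : ℕ, (X : 𝕜⟦X⟧) ^ ((i + 1) * j) else 1)
    (s := Finset.range K) (by
      intro b hb
      rw [if_neg]
      simpa using hb)
  rw [show (PowerSeries.mk fun n => (boundedPartitions K n : 𝕜)) = _ from h.unique h']
  refine Finset.prod_congr rfl fun i hi => ?_
  rw [if_pos (by simpa using hi), tsum_X_pow_mul_eq_mk _ (Nat.succ_pos i)]

lemma hasSum_dvd_mul_pow {𝕜 : Type*} [RCLike 𝕜] {z : 𝕜} (hz : ‖z‖ < 1) {k : ℕ} (hk : 0 < k) :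
    HasSum (fun n => (if k ∣ n then (1 : 𝕜) else 0) * z ^ n) (1 - z ^ k)⁻¹ := by
  have hinj : Function.Injective (fun j : ℕ => k * j) := fun a b h => Nat.eq_of_mul_eq_mul_left hk h
  have hzk : ‖z ^ k‖ < 1 := by
    rw [norm_pow]; exact pow_lt_one₀ (norm_nonneg _) hz hk.ne'
  rw [← hinj.hasSum_iff]
  · convert hasSum_geometric_of_norm_lt_one hzk using 2 with j
    simp [pow_mul]
  · intro n hn
    have : ¬ k ∣ n := fun ⟨c, hc⟩ => hn ⟨c, hc.symm⟩
    simp [this]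

lemma summable_norm_dvd_mul_pow {𝕜 : Type*} [RCLike 𝕜] {z : 𝕜} (hz : ‖z‖ < 1) {k : ℕ} :
    Summable (fun n => ‖(if k ∣ n then (1 : 𝕜) else 0) * z ^ n‖) := by
  refine Summable.of_nonneg_of_le (fun _ => norm_nonneg _) (fun n => ?_)
    (summable_geometric_of_lt_one (norm_nonneg z) hz)
  split_ifs <;> simp

lemma summable_tsum_coeff_mul {𝕜 : Type*} [RCLike 𝕜] {z : 𝕜} {A B : 𝕜⟦X⟧}
    (hA : Summable fun n => ‖coeff n A * z ^ n‖) (hB : Summable fun n => ‖coeff n B * z ^ n‖) :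
    Summable (fun n => ‖coeff n (A * B) * z ^ n‖) ∧
      ∑' n, coeff n (A * B) * z ^ n = (∑' n, coeff n A * z ^ n) * ∑' n, coeff n B * z ^ n := by
  have key (n : ℕ) : coeff n (A * B) * z ^ n = ∑ ij ∈ Finset.HasAntidiagonal.antidiagonal n,
      (coeff ij.1 A * z ^ ij.1) * (coeff ij.2 B * z ^ ij.2) := by
    rw [coeff_mul, Finset.sum_mul]
    refine Finset.sum_congr rfl fun ij hij => ?_
    rw [← Finset.HasAntidiagonal.mem_antidiagonal.mp hij, pow_add]
    ring
  simp_rw [key]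
  constructor
  · have := summable_norm_sum_mul_antidiagonal_of_summable_norm (f := fun n => coeff n A * z ^ n)
      (g := fun n => coeff n B * z ^ n) hA hB
    exact this
  · exact (tsum_mul_tsum_eq_tsum_sum_antidiagonal_of_summable_norm hA hB).symm

lemma boundedPartitions_gen {𝕜 : Type*} [RCLike 𝕜] {z : 𝕜} (hz : ‖z‖ < 1) (K : ℕ) :
    Summable (fun n => ‖(boundedPartitions K n : 𝕜) * z ^ n‖) ∧
      ∑' n, (boundedPartitions K n : 𝕜) * z ^ n = ∏ i ∈ Finset.range K, (1 - z ^ (i + 1))⁻¹ := by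
  have hc (n : ℕ) : (boundedPartitions K n : 𝕜) = coeff n (∏ i ∈ Finset.range K,
      PowerSeries.mk fun n => if (i + 1) ∣ n then (1 : 𝕜) else 0) := by
    rw [← mk_boundedPartitions, coeff_mk]
  simp_rw [hc]
  clear hc
  induction K with
  | zero =>
    simp only [Finset.range_zero, Finset.prod_empty, coeff_one]
    constructor
    · apply summable_of_ne_finset_zero (s := {0})
      intro b hb
      have : b ≠ 0 := by simpa using hb
      simp [this]
    · rw [tsum_eq_single 0]
      · simp
      · intro b hb; simp [hb]
  | succ K ih =>
    obtain ⟨ih1, ih2⟩ := ih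
    simp_rw [Finset.prod_range_succ]
    obtain ⟨h1, h2⟩ := summable_tsum_coeff_mul (z := z) ih1
      (B := PowerSeries.mk fun n => if (K + 1) ∣ n then (1 : 𝕜) else 0)
      (by simpa only [coeff_mk] using summable_norm_dvd_mul_pow hz)
    refine ⟨h1, h2.trans ?_⟩
    simp only [coeff_mk]
    rw [ih2, (hasSum_dvd_mul_pow hz (Nat.succ_pos K)).tsum_eq]

lemma summable_p_mul_pow {r : ℝ} (hr0 : 0 ≤ r) (hr1 : r < 1) :
    Summable (fun n => p n * r ^ n) := by
  have hp (n : ℕ) : 0 ≤ p n := by unfold p; positivity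
  refine summable_of_sum_range_le (c := Real.exp (∑' i : ℕ, r ^ (i + 1) / (1 - r)))
    (fun n => mul_nonneg (hp n) (pow_nonneg hr0 n)) fun N => ?_
  have hz : ‖r‖ < 1 := by rwa [Real.norm_of_nonneg hr0]
  obtain ⟨h1, h2⟩ := boundedPartitions_gen (𝕜 := ℝ) hz N
  have hsum : Summable fun i : ℕ => r ^ (i + 1) / (1 - r) :=
    (((summable_geometric_of_lt_one hr0 hr1).mul_right r).congr fun i => (pow_succ r i).symm).div_const _
  calc ∑ n ∈ Finset.range N, p n * r ^ n
      = ∑ n ∈ Finset.range N, (boundedPartitions N n : ℝ) * r ^ n :=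
        Finset.sum_congr rfl fun n hn => by
          rw [boundedPartitions_eq_p (Finset.mem_range.mp hn).le]
    _ ≤ ∑' n, (boundedPartitions N n : ℝ) * r ^ n :=
        h1.of_norm.sum_le_tsum _ fun n _ => by positivity
    _ = ∏ i ∈ Finset.range N, (1 - r ^ (i + 1))⁻¹ := h2
    _ ≤ ∏ i ∈ Finset.range N, Real.exp (r ^ (i + 1) / (1 - r)) := by
        have hle (i : ℕ) : r ^ (i + 1) ≤ r := pow_le_of_le_one hr0 hr1.le (Nat.succ_ne_zero i)
        refine Finset.prod_le_prod (fun i _ => inv_nonneg.mpr (by linarith [hle i])) fun i _ => ?_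
        have hpos : 0 < 1 - r ^ (i + 1) := by linarith [hle i]
        calc (1 - r ^ (i + 1))⁻¹ = r ^ (i + 1) / (1 - r ^ (i + 1)) + 1 := by field_simp; ring
          _ ≤ r ^ (i + 1) / (1 - r) + 1 := by
              gcongr
              exact hle i
          _ ≤ _ := Real.add_one_le_exp _
    _ = Real.exp (∑ i ∈ Finset.range N, r ^ (i + 1) / (1 - r)) := (Real.exp_sum _ _).symm
    _ ≤ _ := by
        gcongr
        exact hsum.sum_le_tsum _ fun i _ => div_nonneg (by positivity) (by linarith)

lemma summable_pair_pow_div {z : ℂ} (hz : ‖z‖ < 1) :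
    Summable fun q : ℕ × ℕ => z ^ ((q.1 + 1) * (q.2 + 1)) / ((q.1 : ℂ) + 1) := by
  have hg := summable_geometric_of_lt_one (norm_nonneg z) hz
  refine Summable.of_norm_bounded (g := fun q : ℕ × ℕ => ‖z‖ ^ q.1 * ‖z‖ ^ q.2)
    (hg.mul_of_nonneg hg (fun _ => by positivity) fun _ => by positivity) fun q => ?_
  rw [norm_div, norm_pow, ← pow_add]
  have h1 : (1 : ℝ) ≤ ‖(q.1 : ℂ) + 1‖ := by
    have : ((q.1 : ℂ) + 1) = ((q.1 + 1 : ℕ) : ℂ) := by push_cast; rfl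
    rw [this, Complex.norm_natCast]
    exact_mod_cast Nat.succ_pos _
  calc _ ≤ ‖z‖ ^ ((q.1 + 1) * (q.2 + 1)) := div_le_self (by positivity) h1
    _ ≤ _ := pow_le_pow_of_le_one (norm_nonneg _) hz.le (by nlinarith)

/-- Euler's product for the partition generating function, in exponential form. -/
theorem tsum_p_mul_pow {z : ℂ} (hz : ‖z‖ < 1) :
    ∑' n, (p n : ℂ) * z ^ n =
      Complex.exp (∑' q : ℕ × ℕ, z ^ ((q.1 + 1) * (q.2 + 1)) / ((q.1 : ℂ) + 1)) := by
  have hlim : Tendsto (fun K => ∑' n, (boundedPartitions K n : ℂ) * z ^ n) atTop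
      (𝓝 (∑' n, (p n : ℂ) * z ^ n)) := by
    refine tendsto_tsum_of_dominated_convergence (bound := fun n => p n * ‖z‖ ^ n)
      (summable_p_mul_pow (norm_nonneg z) hz) (fun n => ?_) (Eventually.of_forall fun K n => ?_)
    · refine tendsto_const_nhds.congr' ?_
      filter_upwards [eventually_ge_atTop n] with K hK
      rw [← boundedPartitions_eq_p hK]
      simp
    · rw [norm_mul, norm_pow, Complex.norm_natCast]
      gcongr
      exact boundedPartitions_le_p K n
  refine tendsto_nhds_unique hlim ?_
  simp_rw [(boundedPartitions_gen hz _).2]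
  have hzk (i : ℕ) : ‖z ^ (i + 1)‖ < 1 := by
    rw [norm_pow]; exact pow_lt_one₀ (norm_nonneg _) hz (Nat.succ_ne_zero i)
  have hfib (i : ℕ) : HasSum (fun j : ℕ => z ^ ((j + 1) * (i + 1)) / ((j : ℂ) + 1))
      (-Complex.log (1 - z ^ (i + 1))) := by
    have := (hasSum_nat_add_iff' 1).mpr (Complex.hasSum_taylorSeries_neg_log (hzk i))
    simp only [Finset.range_one, Finset.sum_singleton, pow_zero, Nat.cast_zero, div_zero,
      sub_zero] at this
    have he (j : ℕ) : z ^ ((j + 1) * (i + 1)) / ((j : ℂ) + 1) =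
        (z ^ (i + 1)) ^ (j + 1) / ((j + 1 : ℕ) : ℂ) := by
      rw [← pow_mul, mul_comm (j + 1), Nat.cast_add_one]
    rw [funext he]
    exact this
  have hs : HasSum (fun i : ℕ => -Complex.log (1 - z ^ (i + 1)))
      (∑' q : ℕ × ℕ, z ^ ((q.1 + 1) * (q.2 + 1)) / ((q.1 : ℂ) + 1)) := by
    have h := ((Equiv.prodComm ℕ ℕ).hasSum_iff.mpr (summable_pair_pow_div hz).hasSum)
    exact HasSum.prod_fiberwise h hfib
  refine ((Complex.continuous_exp.tendsto _).comp hs.tendsto_sum_nat).congr fun K => ?_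
  rw [Function.comp_apply, Complex.exp_sum]
  refine Finset.prod_congr rfl fun i _ => ?_
  have hne : 1 - z ^ (i + 1) ≠ 0 := fun h => by
    have := hzk i
    rw [← sub_eq_zero.mp h] at this
    simp at this
  rw [Complex.exp_neg, Complex.exp_log hne]

end GeneratingFunction

section Moments

lemma HasSum.of_eq {ι : Type*} {f g : ι → ℝ} {a b : ℝ} (h : HasSum f a) (hfg : ∀ i, g i = f i)
    (hab : b = a) : HasSum g b := by
  rw [funext hfg, hab]
  exact h

lemma exp_neg_norm_lt_one {s : ℝ} (hs : 0 < s) : ‖Real.exp (-s)‖ < 1 := by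
  rw [Real.norm_of_nonneg (Real.exp_pos _).le, Real.exp_lt_one_iff]
  linarith

lemma one_sub_exp_neg_pos {s : ℝ} (hs : 0 < s) : 0 < 1 - Real.exp (-s) := by
  have := exp_neg_norm_lt_one hs
  rw [Real.norm_of_nonneg (Real.exp_pos _).le] at this
  linarith

lemma exp_neg_mul_succ (s : ℝ) (k : ℕ) :
    Real.exp (-(s * ((k : ℝ) + 1))) = Real.exp (-s) * Real.exp (-s) ^ k := by
  rw [← Real.exp_nat_mul, ← Real.exp_add]
  congr 1
  ring

lemma hasSum_succ_mul_exp {s : ℝ} (hs : 0 < s) :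
    HasSum (fun k : ℕ => ((k : ℝ) + 1) * Real.exp (-(s * ((k : ℝ) + 1))))
      (Real.exp (-s) / (1 - Real.exp (-s)) ^ 2) := by
  have h := (hasSum_choose_mul_geometric_of_norm_lt_one 1 (exp_neg_norm_lt_one hs)).mul_left
    (Real.exp (-s))
  refine h.of_eq (fun k => ?_) (by ring)
  rw [exp_neg_mul_succ, Nat.choose_one_right]
  push_cast
  ring

lemma hasSum_succ_sq_mul_exp {s : ℝ} (hs : 0 < s) :
    HasSum (fun k : ℕ => ((k : ℝ) + 1) ^ 2 * Real.exp (-(s * ((k : ℝ) + 1))))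
      (2 * Real.exp (-s) / (1 - Real.exp (-s)) ^ 3 - Real.exp (-s) / (1 - Real.exp (-s)) ^ 2) := by
  have h := ((hasSum_choose_mul_geometric_of_norm_lt_one 2 (exp_neg_norm_lt_one hs)).mul_left
    (2 * Real.exp (-s))).sub (hasSum_succ_mul_exp hs)
  refine h.of_eq (fun k => ?_) (by ring)
  rw [exp_neg_mul_succ, Nat.cast_choose_two]
  push_cast
  ring

lemma summable_succ_cube_mul_exp {s : ℝ} (hs : 0 < s) :
    Summable (fun k : ℕ => ((k : ℝ) + 1) ^ 3 * Real.exp (-(s * ((k : ℝ) + 1)))) ∧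
    ∑' k : ℕ, ((k : ℝ) + 1) ^ 3 * Real.exp (-(s * ((k : ℝ) + 1))) ≤
      6 * Real.exp (-s) / (1 - Real.exp (-s)) ^ 4 := by
  have h := (hasSum_choose_mul_geometric_of_norm_lt_one 3 (exp_neg_norm_lt_one hs)).mul_left
    (6 * Real.exp (-s))
  have hle (k : ℕ) : ((k : ℝ) + 1) ^ 3 * Real.exp (-(s * ((k : ℝ) + 1))) ≤
      6 * Real.exp (-s) * (((k + 3).choose 3 : ℕ) * Real.exp (-s) ^ k) := by
    have hc : (6 : ℝ) * ((k + 3).choose 3 : ℕ) = ((k : ℝ) + 3) * (k + 2) * (k + 1) := by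
      have := Nat.descFactorial_eq_factorial_mul_choose (k + 3) 3
      simp [Nat.descFactorial, Nat.factorial] at this
      rw [show (6 : ℝ) * ((k + 3).choose 3 : ℕ) = ((6 * (k + 3).choose 3 : ℕ) : ℝ) by push_cast; rfl,
        ← this]
      push_cast
      ring
    rw [exp_neg_mul_succ]
    calc _ ≤ ((k : ℝ) + 3) * (k + 2) * (k + 1) * (Real.exp (-s) * Real.exp (-s) ^ k) := by
          gcongr
          have : (0 : ℝ) ≤ k := Nat.cast_nonneg k
          nlinarith [mul_nonneg this this]
      _ = _ := by rw [← hc]; ring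
  have hsum := Summable.of_nonneg_of_le (fun k : ℕ => by positivity) hle h.summable
  refine ⟨hsum, (hsum.tsum_le_tsum hle h.summable).trans (le_of_eq ?_)⟩
  rw [h.tsum_eq]
  ring

lemma div_one_sub_exp_neg_le {s : ℝ} (hs : 0 < s) : s / (1 - Real.exp (-s)) ≤ 1 + s := by
  rw [div_le_iff₀ (one_sub_exp_neg_pos hs)]
  have h1 : Real.exp (-s) * Real.exp s = 1 := by rw [← Real.exp_add]; simp
  have h2 := Real.add_one_le_exp s
  nlinarith [Real.exp_pos (-s)]

lemma one_add_pow_four_mul_exp_neg_le {s : ℝ} (hs : 0 < s) :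
    (1 + s) ^ 4 * Real.exp (-s) ≤ 256 := by
  have h := Real.add_one_le_exp (s / 4)
  have h2 : Real.exp s = Real.exp (s / 4) ^ 4 := by
    rw [← Real.exp_nat_mul]; congr 1; push_cast; ring
  rw [Real.exp_neg, ← div_eq_mul_inv, div_le_iff₀ (Real.exp_pos s), h2]
  calc (1 + s) ^ 4 ≤ (4 * Real.exp (s / 4)) ^ 4 := by gcongr; linarith
    _ = _ := by ring

lemma pow_mul_exp_div_le {s : ℝ} (hs : 0 < s) {j : ℕ} (hj : j ≤ 4) :
    s ^ j * (Real.exp (-s) / (1 - Real.exp (-s)) ^ j) ≤ 256 := by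
  have h0 := one_sub_exp_neg_pos hs
  calc s ^ j * (Real.exp (-s) / (1 - Real.exp (-s)) ^ j)
      = (s / (1 - Real.exp (-s))) ^ j * Real.exp (-s) := by rw [div_pow]; ring
    _ ≤ (1 + s) ^ j * Real.exp (-s) := by
        gcongr
        exact div_one_sub_exp_neg_le hs
    _ ≤ (1 + s) ^ 4 * Real.exp (-s) := by
        gcongr
        linarith
    _ ≤ 256 := one_add_pow_four_mul_exp_neg_le hs

lemma sq_mul_exp_div_le_one {s : ℝ} (hs : 0 < s) :
    s ^ 2 * (Real.exp (-s) / (1 - Real.exp (-s)) ^ 2) ≤ 1 := by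
  have h0 := one_sub_exp_neg_pos hs
  have h1 : s / 2 ≤ Real.sinh (s / 2) := Real.self_le_sinh_iff.mpr (by linarith)
  rw [Real.sinh_eq] at h1
  have h2 : Real.exp (-s) = Real.exp (-(s / 2)) ^ 2 := by
    rw [← Real.exp_nat_mul]; congr 1; push_cast; ring
  have h3 : Real.exp (-(s / 2)) * Real.exp (s / 2) = 1 := by rw [← Real.exp_add]; simp
  have h4 : s * Real.exp (-(s / 2)) ≤ 1 - Real.exp (-s) := by
    rw [h2]
    nlinarith [Real.exp_pos (-(s / 2))]
  rw [← mul_div_assoc, div_le_one (by positivity), h2, ← mul_pow, ← h2]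
  gcongr

lemma one_sub_le_sq_mul_exp_div {s : ℝ} (hs : 0 < s) :
    1 - s ≤ s ^ 2 * (Real.exp (-s) / (1 - Real.exp (-s)) ^ 2) := by
  have h0 := one_sub_exp_neg_pos hs
  have h1 := Real.add_one_le_exp (-s)
  have h2 : 1 ≤ s / (1 - Real.exp (-s)) := by rw [one_le_div h0]; linarith
  calc 1 - s ≤ Real.exp (-s) := by linarith
    _ ≤ (s / (1 - Real.exp (-s))) ^ 2 * Real.exp (-s) :=
        le_mul_of_one_le_left (Real.exp_pos _).le (one_le_pow₀ h2)
    _ = _ := by rw [div_pow]; ring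

lemma tendsto_div_one_sub_exp_neg :
    Tendsto (fun s : ℝ => s / (1 - Real.exp (-s))) (𝓝[>] 0) (𝓝 1) := by
  have h1 : Tendsto (fun s : ℝ => 1 + s) (𝓝[>] 0) (𝓝 1) := by
    have : Tendsto (fun s : ℝ => 1 + s) (𝓝 0) (𝓝 (1 + 0)) :=
      (by fun_prop : Continuous fun s : ℝ => 1 + s).tendsto 0
    rw [add_zero] at this
    exact this.mono_left nhdsWithin_le_nhds
  refine tendsto_of_tendsto_of_tendsto_of_le_of_le' tendsto_const_nhds h1 ?_ ?_
  · filter_upwards [self_mem_nhdsWithin] with s hs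
    rw [one_le_div (one_sub_exp_neg_pos hs)]
    linarith [Real.add_one_le_exp (-s)]
  · filter_upwards [self_mem_nhdsWithin] with s hs
    exact div_one_sub_exp_neg_le hs

/-- The weight `e^{-xmk} / m` attached to the pair `(m, k)` of positive integers, shifted to
`ℕ × ℕ`, in the logarithm of the partition generating function at `e^{-x}`. -/
noncomputable def weight (x : ℝ) (q : ℕ × ℕ) : ℝ :=
  Real.exp (-(x * (((q.1 : ℝ) + 1) * ((q.2 : ℝ) + 1)))) / ((q.1 : ℝ) + 1)

/-- The frequency `m * k` attached to the pair `(m, k)` of positive integers, shifted. -/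
noncomputable def freq (q : ℕ × ℕ) : ℝ := ((q.1 : ℝ) + 1) * ((q.2 : ℝ) + 1)

/-- The `j`-th moment of the frequencies under the weights. -/
noncomputable def moment (j : ℕ) (x : ℝ) : ℝ := ∑' q : ℕ × ℕ, weight x q * freq q ^ j

lemma weight_nonneg (x : ℝ) (q : ℕ × ℕ) : 0 ≤ weight x q := by unfold weight; positivity

lemma one_le_freq (q : ℕ × ℕ) : 1 ≤ freq q := by
  unfold freq
  have h1 : (0 : ℝ) ≤ q.1 := Nat.cast_nonneg _
  have h2 : (0 : ℝ) ≤ q.2 := Nat.cast_nonneg _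
  nlinarith [mul_nonneg h1 h2]

lemma weight_mul_freq_pow (x : ℝ) (j m k : ℕ) :
    weight x (m, k) * freq (m, k) ^ (j + 1) = ((m : ℝ) + 1) ^ j *
      (((k : ℝ) + 1) ^ (j + 1) * Real.exp (-(x * ((m : ℝ) + 1) * ((k : ℝ) + 1)))) := by
  unfold weight freq
  have : (m : ℝ) + 1 ≠ 0 := by positivity
  rw [mul_pow, mul_assoc x]
  field_simp
  ring

lemma hasSum_inv_succ_sq : HasSum (fun m : ℕ => 1 / ((m : ℝ) + 1) ^ 2) (π ^ 2 / 6) := by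
  have := (hasSum_nat_add_iff' 1).mpr hasSum_zeta_two
  simpa using this

lemma tsum_cube_inner_le {x : ℝ} (hx : 0 < x) (m : ℕ) :
    ∑' k : ℕ, weight x (m, k) * freq (m, k) ^ 3 ≤ 1536 / x ^ 4 * (1 / ((m : ℝ) + 1) ^ 2) := by
  have hs : 0 < x * ((m : ℝ) + 1) := by positivity
  simp_rw [weight_mul_freq_pow x 2 m]
  rw [tsum_mul_left]
  have h1 := (summable_succ_cube_mul_exp hs).2
  have h2 := pow_mul_exp_div_le hs (le_refl 4)
  have h3 : Real.exp (-(x * ((m : ℝ) + 1))) / (1 - Real.exp (-(x * ((m : ℝ) + 1)))) ^ 4 ≤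
      256 / (x * ((m : ℝ) + 1)) ^ 4 := by
    rw [le_div_iff₀ (by positivity)]
    linarith
  calc _ ≤ ((m : ℝ) + 1) ^ 2 * (6 * (256 / (x * ((m : ℝ) + 1)) ^ 4)) := by
        gcongr
        refine h1.trans ?_
        rw [mul_div_assoc]
        gcongr
    _ = _ := by field_simp; norm_num

lemma summable_weight_mul_freq_cube {x : ℝ} (hx : 0 < x) :
    Summable fun q : ℕ × ℕ => weight x q * freq q ^ 3 := by
  have h0 (q : ℕ × ℕ) : 0 ≤ weight x q * freq q ^ 3 :=
    mul_nonneg (weight_nonneg x q) (pow_nonneg (zero_le_one.trans (one_le_freq q)) 3)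
  rw [summable_prod_of_nonneg h0]
  refine ⟨fun m => ?_, ?_⟩
  · simp_rw [weight_mul_freq_pow x 2 m]
    exact (summable_succ_cube_mul_exp (by positivity)).1.mul_left _
  · exact Summable.of_nonneg_of_le (fun m => tsum_nonneg fun k => h0 _) (tsum_cube_inner_le hx)
      (hasSum_inv_succ_sq.summable.mul_left _)

lemma summable_weight_mul_freq_pow {x : ℝ} (hx : 0 < x) {j : ℕ} (hj : j ≤ 3) :
    Summable fun q : ℕ × ℕ => weight x q * freq q ^ j := by
  refine Summable.of_nonneg_of_le (fun q => mul_nonneg (weight_nonneg x q)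
    (pow_nonneg (zero_le_one.trans (one_le_freq q)) j)) (fun q => ?_)
    (summable_weight_mul_freq_cube hx)
  gcongr
  · exact weight_nonneg x q
  · exact one_le_freq q

lemma moment_three_le {x : ℝ} (hx : 0 < x) : moment 3 x ≤ 1536 * (π ^ 2 / 6) / x ^ 4 := by
  unfold moment
  have h := summable_weight_mul_freq_cube hx
  rw [h.tsum_prod]
  calc _ ≤ ∑' m : ℕ, 1536 / x ^ 4 * (1 / ((m : ℝ) + 1) ^ 2) :=
        h.prod.tsum_le_tsum (tsum_cube_inner_le hx) (hasSum_inv_succ_sq.summable.mul_left _)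
    _ = _ := by rw [tsum_mul_left, hasSum_inv_succ_sq.tsum_eq]; ring

lemma sq_mul_moment_one {x : ℝ} (hx : 0 < x) :
    HasSum (fun m : ℕ => 1 / ((m : ℝ) + 1) ^ 2 * ((x * ((m : ℝ) + 1)) ^ 2 *
      (Real.exp (-(x * ((m : ℝ) + 1))) / (1 - Real.exp (-(x * ((m : ℝ) + 1)))) ^ 2)))
      (x ^ 2 * moment 1 x) := by
  have h := (summable_weight_mul_freq_pow hx (j := 1) (by norm_num)).hasSum.prod_fiberwise
    (g := fun m : ℕ => Real.exp (-(x * ((m : ℝ) + 1))) / (1 - Real.exp (-(x * ((m : ℝ) + 1)))) ^ 2)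
    (fun m => by
      have := hasSum_succ_mul_exp (s := x * ((m : ℝ) + 1)) (by positivity)
      simp_rw [weight_mul_freq_pow x 0 m]
      simpa using this)
  refine (h.mul_left (x ^ 2)).of_eq (fun m => ?_) rfl
  field_simp

lemma cube_mul_moment_two {x : ℝ} (hx : 0 < x) :
    HasSum (fun m : ℕ => 1 / ((m : ℝ) + 1) ^ 2 * ((x * ((m : ℝ) + 1)) ^ 3 *
      (2 * Real.exp (-(x * ((m : ℝ) + 1))) / (1 - Real.exp (-(x * ((m : ℝ) + 1)))) ^ 3 -
        Real.exp (-(x * ((m : ℝ) + 1))) / (1 - Real.exp (-(x * ((m : ℝ) + 1)))) ^ 2)))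
      (x ^ 3 * moment 2 x) := by
  have h := (summable_weight_mul_freq_pow hx (j := 2) (by norm_num)).hasSum.prod_fiberwise
    (g := fun m : ℕ => ((m : ℝ) + 1) *
      (2 * Real.exp (-(x * ((m : ℝ) + 1))) / (1 - Real.exp (-(x * ((m : ℝ) + 1)))) ^ 3 -
        Real.exp (-(x * ((m : ℝ) + 1))) / (1 - Real.exp (-(x * ((m : ℝ) + 1)))) ^ 2))
    (fun m => by
      have := (hasSum_succ_sq_mul_exp (s := x * ((m : ℝ) + 1)) (by positivity)).mul_left
        ((m : ℝ) + 1)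
      simp_rw [weight_mul_freq_pow x 1 m]
      simpa using this)
  refine (h.mul_left (x ^ 3)).of_eq (fun m => ?_) rfl
  have : (m : ℝ) + 1 ≠ 0 := by positivity
  generalize (2 * Real.exp (-(x * ((m : ℝ) + 1))) / (1 - Real.exp (-(x * ((m : ℝ) + 1)))) ^ 3 -
        Real.exp (-(x * ((m : ℝ) + 1))) / (1 - Real.exp (-(x * ((m : ℝ) + 1)))) ^ 2) = y
  field_simp

lemma summable_succ_rpow : Summable fun m : ℕ => ((m : ℝ) + 1) ^ (-(5 / 4) : ℝ) := by
  have := (summable_nat_add_iff 1).mpr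
    (Real.summable_nat_rpow.mpr (by norm_num : (-(5 / 4) : ℝ) < -1))
  simpa using this

/-- The first moment is `π² / (6 x²)` up to a relative error `O(x^{3/4})`. -/
lemma exists_abs_sq_mul_moment_one_sub_le :
    ∃ C : ℝ, 0 ≤ C ∧ ∀ x : ℝ, 0 < x → |x ^ 2 * moment 1 x - π ^ 2 / 6| ≤ C * x ^ (3 / 4 : ℝ) := by
  refine ⟨∑' m : ℕ, ((m : ℝ) + 1) ^ (-(5 / 4) : ℝ), tsum_nonneg fun m => by positivity,
    fun x hx => ?_⟩
  have h := hasSum_inv_succ_sq.sub (sq_mul_moment_one hx)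
  rw [abs_sub_comm, ← h.tsum_eq, ← tsum_mul_right, ← Real.norm_eq_abs]
  refine tsum_of_norm_bounded (summable_succ_rpow.mul_right _).hasSum fun m => ?_
  have hm : (0 : ℝ) < (m : ℝ) + 1 := by positivity
  have hs : 0 < x * ((m : ℝ) + 1) := by positivity
  set s := x * ((m : ℝ) + 1) with hs'
  set y := s ^ 2 * (Real.exp (-s) / (1 - Real.exp (-s)) ^ 2) with hy
  have h1 : y ≤ 1 := sq_mul_exp_div_le_one hs
  have h2 : 1 - s ≤ y := one_sub_le_sq_mul_exp_div hs
  have h3 : 0 ≤ y := by positivity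
  have h4 : 1 - y ≤ s ^ (3 / 4 : ℝ) := by
    rcases le_total s 1 with h | h
    · calc 1 - y ≤ s := by linarith
        _ = s ^ (1 : ℝ) := (Real.rpow_one s).symm
        _ ≤ _ := Real.rpow_le_rpow_of_exponent_ge hs h (by norm_num)
    · exact le_trans (by linarith) (Real.one_le_rpow h (by norm_num))
  rw [← mul_one_sub, norm_mul, Real.norm_of_nonneg (by positivity),
    Real.norm_of_nonneg (by linarith : 0 ≤ 1 - y)]
  calc 1 / ((m : ℝ) + 1) ^ 2 * (1 - y)
      ≤ 1 / ((m : ℝ) + 1) ^ 2 * s ^ (3 / 4 : ℝ) := by gcongr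
    _ = _ := by
      rw [hs', Real.mul_rpow hx.le hm.le, one_div, ← Real.rpow_natCast, ← Real.rpow_neg hm.le,
        mul_comm (x ^ (3 / 4 : ℝ)), ← mul_assoc, ← Real.rpow_add hm]
      norm_num

lemma tendsto_cube_mul_moment_two :
    Tendsto (fun x => x ^ 3 * moment 2 x) (𝓝[>] 0) (𝓝 (π ^ 2 / 3)) := by
  have hlim : Tendsto (fun s : ℝ => s ^ 3 * (2 * Real.exp (-s) / (1 - Real.exp (-s)) ^ 3 -
      Real.exp (-s) / (1 - Real.exp (-s)) ^ 2)) (𝓝[>] 0) (𝓝 2) := by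
    have hid : Tendsto (fun s : ℝ => s) (𝓝[>] 0) (𝓝 0) := nhdsWithin_le_nhds
    have hexp : Tendsto (fun s : ℝ => Real.exp (-s)) (𝓝[>] 0) (𝓝 1) := by
      have : Tendsto (fun s : ℝ => Real.exp (-s)) (𝓝 0) (𝓝 (Real.exp (-0))) :=
        (by fun_prop : Continuous fun s : ℝ => Real.exp (-s)).tendsto 0
      rw [neg_zero, Real.exp_zero] at this
      exact this.mono_left nhdsWithin_le_nhds
    have := ((hexp.const_mul 2).mul (tendsto_div_one_sub_exp_neg.pow 3)).sub
      ((hid.mul hexp).mul (tendsto_div_one_sub_exp_neg.pow 2))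
    norm_num at this
    refine this.congr fun s => ?_
    rw [div_pow, div_pow]
    ring
  have hsum : Tendsto (fun x : ℝ => ∑' m : ℕ, 1 / ((m : ℝ) + 1) ^ 2 * ((x * ((m : ℝ) + 1)) ^ 3 *
      (2 * Real.exp (-(x * ((m : ℝ) + 1))) / (1 - Real.exp (-(x * ((m : ℝ) + 1)))) ^ 3 -
        Real.exp (-(x * ((m : ℝ) + 1))) / (1 - Real.exp (-(x * ((m : ℝ) + 1)))) ^ 2)))
      (𝓝[>] 0) (𝓝 (∑' m : ℕ, 1 / ((m : ℝ) + 1) ^ 2 * 2)) := by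
    refine tendsto_tsum_of_dominated_convergence (bound := fun m : ℕ => 1 / ((m : ℝ) + 1) ^ 2 * 512)
      (hasSum_inv_succ_sq.summable.mul_right _) (fun m => ?_) ?_
    · refine (hlim.comp ?_).const_mul _
      refine tendsto_nhdsWithin_iff.mpr ⟨?_, ?_⟩
      · have : Tendsto (fun x : ℝ => x * ((m : ℝ) + 1)) (𝓝 0) (𝓝 (0 * ((m : ℝ) + 1))) :=
          (by fun_prop : Continuous fun x : ℝ => x * ((m : ℝ) + 1)).tendsto 0
        rw [zero_mul] at this
        exact this.mono_left nhdsWithin_le_nhds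
      · filter_upwards [self_mem_nhdsWithin] with x hx
        have : (0 : ℝ) < x := hx
        exact Set.mem_Ioi.mpr (by positivity)
    · filter_upwards [self_mem_nhdsWithin] with x hx m
      have hx' : (0 : ℝ) < x := hx
      have hs : 0 < x * ((m : ℝ) + 1) := by positivity
      rw [norm_mul, Real.norm_of_nonneg (by positivity)]
      gcongr
      set s := x * ((m : ℝ) + 1)
      have h0 := one_sub_exp_neg_pos hs
      have hQ := Real.exp_pos (-s)
      have h3 := pow_mul_exp_div_le hs (show 3 ≤ 4 by norm_num)
      have hge : Real.exp (-s) / (1 - Real.exp (-s)) ^ 2 ≤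
          2 * Real.exp (-s) / (1 - Real.exp (-s)) ^ 3 := by
        rw [div_le_div_iff₀ (by positivity) (by positivity)]
        have : (1 - Real.exp (-s)) ^ 3 = (1 - Real.exp (-s)) ^ 2 * (1 - Real.exp (-s)) := by ring
        rw [this]
        nlinarith [mul_pos hQ (pow_pos h0 2), mul_pos hQ (mul_pos hQ (pow_pos h0 2))]
      rw [Real.norm_of_nonneg (mul_nonneg (by positivity) (by linarith))]
      have h2 : 0 ≤ s ^ 3 * (Real.exp (-s) / (1 - Real.exp (-s)) ^ 2) := by positivity
      have h5 : s ^ 3 * (2 * Real.exp (-s) / (1 - Real.exp (-s)) ^ 3) =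
        2 * (s ^ 3 * (Real.exp (-s) / (1 - Real.exp (-s)) ^ 3)) := by ring
      rw [mul_sub, h5]
      linarith
  rw [tsum_mul_right, hasSum_inv_succ_sq.tsum_eq, show π ^ 2 / 6 * 2 = π ^ 2 / 3 by ring] at hsum
  refine hsum.congr' ?_
  filter_upwards [self_mem_nhdsWithin] with x hx
  exact (cube_mul_moment_two hx).tsum_eq

end Moments

section LogRatio

/-- `log (F (e^{-x + iy}) / F (e^{-x}))` for the partition generating function `F`. -/
noncomputable def logRatio (x y : ℝ) : ℂ :=
  ∑' q : ℕ × ℕ, (weight x q : ℂ) * (Complex.exp ((freq q * y : ℝ) * Complex.I) - 1)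

lemma norm_exp_mul_I_sub_one_le (θ : ℝ) : ‖Complex.exp (θ * Complex.I) - 1‖ ≤ |θ| := by
  rw [mul_comm]
  exact Real.norm_exp_I_mul_ofReal_sub_one_le

lemma norm_exp_mul_I_sub_taylor_le (θ : ℝ) :
    ‖Complex.exp (θ * Complex.I) - 1 - θ * Complex.I + (θ : ℂ) ^ 2 / 2‖ ≤ 4 * |θ| ^ 3 := by
  rcases le_total |θ| 1 with h | h
  · have hn : ‖(θ : ℂ) * Complex.I‖ = |θ| := by simp
    have hb := Complex.exp_bound (x := (θ : ℂ) * Complex.I) (by rw [hn]; exact h) (n := 3)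
      (by norm_num)
    rw [hn] at hb
    have he : Complex.exp (θ * Complex.I) - 1 - θ * Complex.I + (θ : ℂ) ^ 2 / 2 =
        Complex.exp (θ * Complex.I) -
          ∑ m ∈ Finset.range 3, ((θ : ℂ) * Complex.I) ^ m / (m.factorial : ℂ) := by
      simp [Finset.sum_range_succ, Nat.factorial, mul_pow]
      ring
    rw [he]
    refine hb.trans ?_
    rw [mul_comm]
    gcongr
    norm_num [Nat.factorial]
  · have h1 := norm_exp_mul_I_sub_one_le θ
    have h2 : ‖(θ : ℂ) * Complex.I‖ = |θ| := by simp
    have h3 : ‖(θ : ℂ) ^ 2 / 2‖ = |θ| ^ 2 / 2 := by simp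
    calc _ ≤ ‖Complex.exp (θ * Complex.I) - 1‖ + ‖(θ : ℂ) * Complex.I‖ + ‖(θ : ℂ) ^ 2 / 2‖ :=
          (norm_add_le _ _).trans (by gcongr; exact norm_sub_le _ _)
      _ ≤ |θ| + |θ| + |θ| ^ 2 / 2 := by rw [h2, h3]; gcongr
      _ ≤ 4 * |θ| ^ 3 := by
          have h4 : |θ| ^ 1 ≤ |θ| ^ 3 := pow_le_pow_right₀ h (by norm_num)
          have h5 : |θ| ^ 2 ≤ |θ| ^ 3 := pow_le_pow_right₀ h (by norm_num)
          rw [pow_one] at h4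
          linarith

lemma norm_logRatio_term_le (x y : ℝ) (q : ℕ × ℕ) :
    ‖(weight x q : ℂ) * (Complex.exp ((freq q * y : ℝ) * Complex.I) - 1)‖ ≤
      weight x q * freq q ^ 0 * 2 := by
  rw [norm_mul, Complex.norm_real, Real.norm_of_nonneg (weight_nonneg x q), pow_zero, mul_one]
  refine mul_le_mul_of_nonneg_left ?_ (weight_nonneg x q)
  refine (norm_sub_le _ _).trans ?_
  rw [Complex.norm_exp_ofReal_mul_I]
  norm_num

lemma summable_logRatio {x : ℝ} (hx : 0 < x) (y : ℝ) :
    Summable fun q : ℕ × ℕ =>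
      (weight x q : ℂ) * (Complex.exp ((freq q * y : ℝ) * Complex.I) - 1) :=
  Summable.of_norm_bounded ((summable_weight_mul_freq_pow hx (Nat.zero_le 3)).mul_right 2)
    (norm_logRatio_term_le x y)

lemma continuous_logRatio {x : ℝ} (hx : 0 < x) : Continuous (logRatio x) := by
  unfold logRatio
  refine continuous_tsum (fun q => ?_)
    ((summable_weight_mul_freq_pow hx (Nat.zero_le 3)).mul_right 2)
    (fun q y => norm_logRatio_term_le x y q)
  fun_prop

/-- Second-order Taylor expansion of `logRatio` with cubic error. -/
lemma norm_logRatio_sub_le {x : ℝ} (hx : 0 < x) (y : ℝ) :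
    ‖logRatio x y - (y * moment 1 x * Complex.I - (y : ℂ) ^ 2 * moment 2 x / 2)‖ ≤
      4 * |y| ^ 3 * moment 3 x := by
  have h1 := Complex.hasSum_ofReal.mpr
    (summable_weight_mul_freq_pow hx (show 1 ≤ 3 by norm_num)).hasSum
  have h2 := Complex.hasSum_ofReal.mpr
    (summable_weight_mul_freq_pow hx (show 2 ≤ 3 by norm_num)).hasSum
  have h3 := (summable_weight_mul_freq_pow hx (le_refl 3)).hasSum
  have h := (summable_logRatio hx y).hasSum.sub
    ((h1.mul_left ((y : ℂ) * Complex.I)).sub (h2.mul_left ((y : ℂ) ^ 2 / 2)))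
  have hval : logRatio x y - (y * moment 1 x * Complex.I - (y : ℂ) ^ 2 * moment 2 x / 2) =
      ∑' q : ℕ × ℕ, (weight x q : ℂ) * (Complex.exp ((freq q * y : ℝ) * Complex.I) - 1) -
      ((y : ℂ) * Complex.I * (∑' q : ℕ × ℕ, weight x q * freq q ^ 1 : ℝ) -
        (y : ℂ) ^ 2 / 2 * (∑' q : ℕ × ℕ, weight x q * freq q ^ 2 : ℝ)) := by
    unfold logRatio moment
    ring
  rw [hval, ← h.tsum_eq]
  refine tsum_of_norm_bounded (h3.mul_left (4 * |y| ^ 3)) fun q => ?_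
  have hq : (0 : ℝ) ≤ freq q := zero_le_one.trans (one_le_freq q)
  have he : (weight x q : ℂ) * (Complex.exp ((freq q * y : ℝ) * Complex.I) - 1) -
      ((y : ℂ) * Complex.I * (weight x q * freq q ^ 1 : ℝ) -
        (y : ℂ) ^ 2 / 2 * (weight x q * freq q ^ 2 : ℝ)) =
      (weight x q : ℂ) * (Complex.exp ((freq q * y : ℝ) * Complex.I) - 1 -
        (freq q * y : ℝ) * Complex.I + ((freq q * y : ℝ) : ℂ) ^ 2 / 2) := by
    push_cast
    ring
  rw [he, norm_mul, Complex.norm_real, Real.norm_of_nonneg (weight_nonneg x q)]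
  calc _ ≤ weight x q * (4 * |freq q * y| ^ 3) :=
        mul_le_mul_of_nonneg_left (norm_exp_mul_I_sub_taylor_le _) (weight_nonneg x q)
    _ = _ := by rw [abs_mul, abs_of_nonneg hq]; ring

/-- The generating function on the circle of radius `e^{-x}` in terms of `logRatio`. -/
lemma tsum_p_mul_exp {x : ℝ} (hx : 0 < x) (y : ℝ) :
    ∑' n, (p n : ℂ) * Complex.exp (-x + y * Complex.I) ^ n =
      Real.exp (moment 0 x) * Complex.exp (logRatio x y) := by
  have hz : ‖Complex.exp (-x + y * Complex.I)‖ < 1 := by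
    rw [Complex.norm_exp]
    simpa using hx
  have h0 := Complex.hasSum_ofReal.mpr
    (summable_weight_mul_freq_pow hx (Nat.zero_le 3)).hasSum
  rw [tsum_p_mul_pow hz, Complex.ofReal_exp, ← Complex.exp_add]
  congr 1
  unfold moment logRatio
  rw [← h0.tsum_eq, ← h0.summable.tsum_add (summable_logRatio hx y)]
  refine tsum_congr fun q => ?_
  rw [← Complex.exp_nat_mul]
  unfold weight freq
  push_cast
  rw [pow_zero, mul_one, mul_sub, mul_one, add_sub_cancel, div_mul_eq_mul_div, ← Complex.exp_add]
  congr 2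
  ring

/-- The slice `m = 1` of `logRatio` bounds its real part. -/
lemma re_logRatio_le {x : ℝ} (hx : 0 < x) (y : ℝ) :
    (logRatio x y).re ≤ (1 / (1 - Complex.exp (-x + y * Complex.I))).re -
      1 / (1 - Real.exp (-x)) := by
  have hz : ‖Complex.exp (-x + y * Complex.I)‖ < 1 := by
    rw [Complex.norm_exp]
    simpa using hx
  have hre := Complex.hasSum_re (summable_logRatio hx y).hasSum
  have hterm (q : ℕ × ℕ) :
      ((weight x q : ℂ) * (Complex.exp ((freq q * y : ℝ) * Complex.I) - 1)).re =
        -(weight x q * (1 - Real.cos (freq q * y))) := by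
    rw [Complex.re_ofReal_mul, Complex.sub_re, Complex.exp_ofReal_mul_I_re, Complex.one_re]
    ring
  have hslice : HasSum (fun k : ℕ =>
      (weight x (0, k) : ℂ) * (Complex.exp ((freq (0, k) * y : ℝ) * Complex.I) - 1))
      (1 / (1 - Complex.exp (-x + y * Complex.I)) - (1 / (1 - Real.exp (-x)) : ℝ)) := by
    have hr := Complex.hasSum_ofReal.mpr (hasSum_geometric_of_norm_lt_one (exp_neg_norm_lt_one hx))
    have h := (hasSum_nat_add_iff' 1).mpr ((hasSum_geometric_of_norm_lt_one hz).sub hr)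
    simp only [Finset.range_one, Finset.sum_singleton, pow_zero, Complex.ofReal_one, sub_self,
      sub_zero] at h
    rw [one_div, one_div]
    have he (k : ℕ) :
        (weight x (0, k) : ℂ) * (Complex.exp ((freq (0, k) * y : ℝ) * Complex.I) - 1) =
        Complex.exp (-x + y * Complex.I) ^ (k + 1) - ((Real.exp (-x) ^ (k + 1) : ℝ) : ℂ) := by
      unfold weight freq
      push_cast
      rw [← Complex.exp_nat_mul, ← Complex.exp_nat_mul, mul_sub, mul_one, zero_add, div_one,
        ← Complex.exp_add]
      congr 2
      · push_cast; ring
      · push_cast; ring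
    rw [funext he]
    exact h
  have hsre := Complex.hasSum_re hslice
  simp_rw [hterm] at hre hsre
  have hnn (q : ℕ × ℕ) : 0 ≤ weight x q * (1 - Real.cos (freq q * y)) :=
    mul_nonneg (weight_nonneg x q) (by linarith [Real.cos_le_one (freq q * y)])
  have hle := tsum_comp_le_tsum_of_inj (f := fun q : ℕ × ℕ =>
    weight x q * (1 - Real.cos (freq q * y))) (by simpa using hre.summable.neg) hnn
    (i := fun k : ℕ => (0, k)) (fun a b h => by simpa using h)
  have h1 := hre.neg.tsum_eq
  have h2 := hsre.neg.tsum_eq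
  simp only [neg_neg] at h1 h2
  simp only [Function.comp_def] at hle
  rw [h1, h2] at hle
  rw [Complex.sub_re, Complex.ofReal_re] at hle
  unfold logRatio
  linarith

lemma re_one_div_one_sub {r y : ℝ} (hr0 : 0 ≤ r) (hr : r < 1) :
    1 / (1 - r) - (1 / (1 - r * Complex.exp (y * Complex.I))).re =
      r * (1 - Real.cos y) * (1 + r) /
        ((1 - r) * ((1 - r) ^ 2 + 2 * (r * (1 - Real.cos y)))) := by
  have hre : (1 - r * Complex.exp (y * Complex.I)).re = 1 - r * Real.cos y := by
    rw [Complex.sub_re, Complex.re_ofReal_mul, Complex.exp_ofReal_mul_I_re, Complex.one_re]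
  have hn : Complex.normSq (1 - r * Complex.exp (y * Complex.I)) =
      (1 - r) ^ 2 + 2 * (r * (1 - Real.cos y)) := by
    rw [Complex.normSq_apply, hre, Complex.sub_im, Complex.im_ofReal_mul,
      Complex.exp_ofReal_mul_I_im, Complex.one_im]
    have : (0 - r * Real.sin y) * (0 - r * Real.sin y) = r ^ 2 * (1 - Real.cos y ^ 2) := by
      rw [← Real.sin_sq]; ring
    rw [this]
    ring
  rw [one_div (1 - (r : ℂ) * _), Complex.inv_re, hre, hn]
  have hd : 0 < 1 - r := by linarith
  have hw : 0 ≤ r * (1 - Real.cos y) := mul_nonneg hr0 (by linarith [Real.cos_le_one y])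
  have hD : (1 - r) ^ 2 + 2 * (r * (1 - Real.cos y)) ≠ 0 := by positivity
  rw [div_sub_div _ _ hd.ne' hD]
  congr 1
  ring

lemma re_logRatio_le_neg {x y : ℝ} (hx : 0 < x) (hx1 : x ≤ 1) (hy : |y| ≤ π) :
    (logRatio x y).re ≤ -(y ^ 2 / 20 / (x * (x ^ 2 + 2 * (y ^ 2 / 20)))) := by
  refine (re_logRatio_le hx y).trans ?_
  have hr1 : Real.exp (-x) < 1 := by rw [Real.exp_lt_one_iff]; linarith
  have h := re_one_div_one_sub (y := y) (Real.exp_pos (-x)).le hr1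
  rw [Complex.ofReal_exp, Complex.ofReal_neg, ← Complex.exp_add] at h
  rw [← neg_sub, h]
  have hd : 0 < 1 - Real.exp (-x) := by linarith
  have hdx : 1 - Real.exp (-x) ≤ x := by linarith [Real.add_one_le_exp (-x)]
  have hr : 1 / 3 ≤ Real.exp (-x) := by
    have h1 : Real.exp x ≤ 3 :=
      (Real.exp_le_exp.mpr hx1).trans (Real.exp_one_lt_three.le)
    rw [Real.exp_neg, ← one_div]
    gcongr
  have hcos := Real.cos_le_one_sub_mul_cos_sq hy
  have hpi : 3 / 20 ≤ 2 / π ^ 2 := by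
    rw [div_le_div_iff₀ (by norm_num) (by positivity)]
    nlinarith [Real.pi_lt_d2, Real.pi_pos]
  have hw : y ^ 2 / 20 ≤ Real.exp (-x) * (1 - Real.cos y) := by
    have h1 : 3 / 20 * y ^ 2 ≤ 1 - Real.cos y := by
      nlinarith [mul_le_mul_of_nonneg_right hpi (sq_nonneg y)]
    calc y ^ 2 / 20 = 1 / 3 * (3 / 20 * y ^ 2) := by ring
      _ ≤ _ := mul_le_mul hr h1 (by positivity) (Real.exp_pos _).le
  generalize Real.exp (-x) * (1 - Real.cos y) = w at hw
  have hw0 : 0 ≤ y ^ 2 / 20 := by positivity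
  generalize y ^ 2 / 20 = v at *
  generalize hdd : 1 - Real.exp (-x) = d at *
  have hw1 : 0 ≤ w := hw0.trans hw
  refine neg_le_neg ?_
  calc v / (x * (x ^ 2 + 2 * v)) ≤ w / (x * (x ^ 2 + 2 * w)) := by
        rw [div_le_div_iff₀ (by positivity) (by positivity)]
        nlinarith [mul_le_mul_of_nonneg_right hw (pow_pos hx 3).le]
    _ ≤ w * (1 + Real.exp (-x)) / (d * (d ^ 2 + 2 * w)) := by
        gcongr
        exact le_mul_of_one_le_right hw1 (by linarith [Real.exp_pos (-x)])

lemma exp_neg_le_of_scaled {x u : ℝ} (hx : 0 < x) (hxu : x ^ 3 * u ^ 2 ≤ 10) :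
    Real.exp (-(u ^ 2 / 20 / (1 + 2 * x * (u ^ 2 / 20)))) ≤ 5000000000000 / (1 + u ^ 2) ^ 2 := by
  have ha : 0 ≤ u ^ 2 := sq_nonneg u
  generalize u ^ 2 = a at *
  set v := a / 20 / (1 + 2 * x * (a / 20)) with hv
  have hv0 : 0 ≤ v := by positivity
  rw [le_div_iff₀ (by positivity)]
  rcases le_total a 1 with h | h
  · have h1 : Real.exp (-v) ≤ 1 := Real.exp_le_one_iff.mpr (by linarith)
    nlinarith [Real.exp_pos (-v)]
  · have hden : (1 + x * a / 10) ^ 3 ≤ 5 * a ^ 2 := by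
      have h0 : 0 ≤ x * a / 10 := by positivity
      have h1 : (1 + x * a / 10) ^ 3 ≤ 4 * (1 + (x * a / 10) ^ 3) := by
        generalize x * a / 10 = b at h0
        nlinarith [mul_nonneg (by linarith : (0 : ℝ) ≤ 1 + b) (sq_nonneg (1 - b))]
      have h2 : (x * a / 10) ^ 3 ≤ a ^ 2 / 100 := by
        calc (x * a / 10) ^ 3 = x ^ 3 * a * a ^ 2 / 1000 := by ring
          _ ≤ 10 * a ^ 2 / 1000 := by gcongr
          _ = _ := by ring
      nlinarith
    have hv3 : a / 40000 ≤ v ^ 3 := by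
      rw [hv, div_pow, show 1 + 2 * x * (a / 20) = 1 + x * a / 10 by ring,
        le_div_iff₀ (by positivity)]
      calc a / 40000 * (1 + x * a / 10) ^ 3 ≤ a / 40000 * (5 * a ^ 2) := by gcongr
        _ = _ := by ring
    have he := Real.pow_div_factorial_le_exp (x := v) hv0 6
    have hv6 : (a / 40000) ^ 2 ≤ v ^ 6 := by
      calc (a / 40000) ^ 2 ≤ (v ^ 3) ^ 2 := by gcongr
        _ = _ := by ring
    have he' : a ^ 2 / 1152000000000 ≤ Real.exp v := by
      refine le_trans ?_ he
      norm_num [Nat.factorial]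
      linarith
    rw [Real.exp_neg, inv_mul_le_iff₀ (Real.exp_pos v)]
    nlinarith

end LogRatio

section SaddlePoint

/-- The normalized integrand at the saddle point, with radius `e^{-s^2}` and angle `s^3 u`. -/
noncomputable def phase (s u : ℝ) : ℂ :=
  Complex.exp (logRatio (s ^ 2) (s ^ 3 * u) - (π ^ 2 / (6 * s) * u : ℝ) * Complex.I)

lemma continuous_phase {s : ℝ} (hs : 0 < s) : Continuous (phase s) := by
  unfold phase
  have := continuous_logRatio (pow_pos hs 2)
  fun_prop

lemma norm_phase_le {s u : ℝ} (hs : 0 < s) (hs1 : s ≤ 1) (hu : |s ^ 3 * u| ≤ π) :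
    ‖phase s u‖ ≤ 5000000000000 / (1 + u ^ 2) ^ 2 := by
  have hx1 : s ^ 2 ≤ 1 := pow_le_one₀ hs.le hs1
  have hre : (logRatio (s ^ 2) (s ^ 3 * u) - (π ^ 2 / (6 * s) * u : ℝ) * Complex.I).re =
      (logRatio (s ^ 2) (s ^ 3 * u)).re := by
    rw [Complex.sub_re, Complex.re_ofReal_mul, Complex.I_re, mul_zero, sub_zero]
  have hxu : (s ^ 2) ^ 3 * u ^ 2 ≤ 10 := by
    calc (s ^ 2) ^ 3 * u ^ 2 = |s ^ 3 * u| ^ 2 := by rw [sq_abs]; ring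
      _ ≤ π ^ 2 := by gcongr
      _ ≤ 10 := by nlinarith [Real.pi_lt_d2, Real.pi_pos]
  rw [phase, Complex.norm_exp, hre]
  refine le_trans (Real.exp_le_exp.mpr ?_) (exp_neg_le_of_scaled (pow_pos hs 2) hxu)
  refine (re_logRatio_le_neg (pow_pos hs 2) hx1 hu).trans_eq ?_
  congr 1
  have : 1 + 2 * s ^ 2 * (u ^ 2 / 20) ≠ 0 := by positivity
  field_simp

lemma tendsto_pow_nhdsGT_zero {k : ℕ} (hk : k ≠ 0) :
    Tendsto (fun s : ℝ => s ^ k) (𝓝[>] 0) (𝓝[>] 0) := by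
  refine tendsto_nhdsWithin_iff.mpr ⟨?_, ?_⟩
  · refine ((continuous_pow k).tendsto' 0 0 (zero_pow hk)).mono_left nhdsWithin_le_nhds
  · filter_upwards [self_mem_nhdsWithin] with s (hs : 0 < s) using pow_pos hs k

lemma tendsto_cube_mul_moment_one_sub :
    Tendsto (fun s : ℝ => s ^ 3 * moment 1 (s ^ 2) - π ^ 2 / (6 * s)) (𝓝[>] 0) (𝓝 0) := by
  obtain ⟨C, -, hC⟩ := exists_abs_sq_mul_moment_one_sub_le
  have hlim : Tendsto (fun s : ℝ => C * s ^ (1 / 2 : ℝ)) (𝓝[>] 0) (𝓝 0) := by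
    have h : Continuous fun s : ℝ => C * s ^ (1 / 2 : ℝ) :=
      continuous_const.mul (Real.continuous_rpow_const (by norm_num))
    refine (h.tendsto' 0 0 ?_).mono_left nhdsWithin_le_nhds
    rw [Real.zero_rpow (by norm_num), mul_zero]
  refine squeeze_zero_norm' ?_ hlim
  filter_upwards [self_mem_nhdsWithin] with s (hs : 0 < s)
  have h := hC (s ^ 2) (by positivity)
  have he : s ^ 3 * moment 1 (s ^ 2) - π ^ 2 / (6 * s) =
      ((s ^ 2) ^ 2 * moment 1 (s ^ 2) - π ^ 2 / 6) / s := by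
    field_simp
  have hpow : (s ^ 2) ^ (3 / 4 : ℝ) = s ^ (1 / 2 : ℝ) * s := by
    rw [← Real.rpow_natCast, ← Real.rpow_mul hs.le, ← Real.rpow_add_one hs.ne']
    norm_num
  rw [Real.norm_eq_abs, he, abs_div, abs_of_pos hs, div_le_iff₀ hs, mul_assoc, ← hpow]
  exact h

lemma tendsto_phase (u : ℝ) :
    Tendsto (fun s => phase s u) (𝓝[>] 0) (𝓝 (Real.exp (-(π ^ 2 / 6) * u ^ 2) : ℂ)) := by
  have herr : Tendsto (fun s : ℝ => logRatio (s ^ 2) (s ^ 3 * u) -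
      ((s ^ 3 * u : ℝ) * moment 1 (s ^ 2) * Complex.I -
        ((s ^ 3 * u : ℝ) : ℂ) ^ 2 * moment 2 (s ^ 2) / 2)) (𝓝[>] 0) (𝓝 0) := by
    have hlim : Tendsto (fun s : ℝ => 4 * |u| ^ 3 * (1536 * (π ^ 2 / 6)) * s) (𝓝[>] 0) (𝓝 0) :=
      ((continuous_const.mul continuous_id).tendsto' 0 0 (mul_zero _)).mono_left
        nhdsWithin_le_nhds
    refine squeeze_zero_norm' ?_ hlim
    filter_upwards [self_mem_nhdsWithin] with s (hs : 0 < s)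
    refine (norm_logRatio_sub_le (pow_pos hs 2) (s ^ 3 * u)).trans ?_
    calc 4 * |s ^ 3 * u| ^ 3 * moment 3 (s ^ 2)
        ≤ 4 * |s ^ 3 * u| ^ 3 * (1536 * (π ^ 2 / 6) / (s ^ 2) ^ 4) := by
          gcongr
          exact moment_three_le (pow_pos hs 2)
      _ = _ := by
          rw [abs_mul, abs_of_pos (pow_pos hs 3)]
          field_simp
  have h1 := (Complex.continuous_ofReal.tendsto 0).comp tendsto_cube_mul_moment_one_sub
  have h2 := (Complex.continuous_ofReal.tendsto _).comp
    (tendsto_cube_mul_moment_two.comp (tendsto_pow_nhdsGT_zero two_ne_zero))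
  have h := (herr.add (h1.mul_const ((u : ℂ) * Complex.I))).sub (h2.mul_const ((u : ℂ) ^ 2 / 2))
  rw [Complex.ofReal_exp]
  convert ((Complex.continuous_exp.tendsto _).comp h).congr' ?_ using 2
  · congr 1
    push_cast
    ring
  · filter_upwards [self_mem_nhdsWithin] with s (hs : 0 < s)
    simp only [Function.comp_apply, phase]
    congr 1
    push_cast
    ring

/-- Dominated convergence for integrals against `phase`. -/
lemma tendsto_integral_phase_mul {g : ℝ → ℝ → ℂ} {g₀ : ℝ → ℂ}
    (hg : ∀ s, Continuous (g s)) (hbound : ∀ s u, 0 < s → ‖g s u‖ ≤ 1 + u ^ 2)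
    (hlim : ∀ u, Tendsto (fun s => g s u) (𝓝[>] 0) (𝓝 (g₀ u))) :
    Tendsto (fun s : ℝ => ∫ u in -(π / s ^ 3)..π / s ^ 3, phase s u * g s u) (𝓝[>] 0)
      (𝓝 (∫ u : ℝ, (Real.exp (-(π ^ 2 / 6) * u ^ 2) : ℂ) * g₀ u)) := by
  have hind : ∀ᶠ s : ℝ in 𝓝[>] 0,
      ∫ u, (Set.Ioc (-(π / s ^ 3)) (π / s ^ 3)).indicator (fun u => phase s u * g s u) u =
        ∫ u in -(π / s ^ 3)..π / s ^ 3, phase s u * g s u := by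
    filter_upwards [self_mem_nhdsWithin] with s (hs : 0 < s)
    have hpos : 0 < π / s ^ 3 := by positivity
    rw [intervalIntegral.integral_of_le (by linarith), integral_indicator measurableSet_Ioc]
  refine Tendsto.congr' hind ?_
  refine tendsto_integral_filter_of_dominated_convergence
    (fun u => 5000000000000 * (1 + u ^ 2)⁻¹) ?_ ?_ (integrable_inv_one_add_sq.const_mul _) ?_
  · filter_upwards [self_mem_nhdsWithin] with s (hs : 0 < s)
    exact ((continuous_phase hs).mul (hg s)).aestronglyMeasurable.indicator measurableSet_Ioc
  · have h1 : ∀ᶠ s : ℝ in 𝓝[>] 0, s ≤ 1 :=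
      nhdsWithin_le_nhds (eventually_le_nhds zero_lt_one)
    filter_upwards [self_mem_nhdsWithin, h1] with s (hs : 0 < s) hs1
    refine Eventually.of_forall fun u => ?_
    by_cases hu : u ∈ Set.Ioc (-(π / s ^ 3)) (π / s ^ 3)
    · have hs3 := pow_pos hs 3
      have hle : |s ^ 3 * u| ≤ π := by
        rw [abs_mul, abs_of_pos hs3, mul_comm, ← le_div_iff₀ hs3]
        exact abs_le.mpr ⟨hu.1.le, hu.2⟩
      rw [Set.indicator_of_mem hu, norm_mul]
      calc ‖phase s u‖ * ‖g s u‖ ≤ 5000000000000 / (1 + u ^ 2) ^ 2 * (1 + u ^ 2) := by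
            gcongr
            · exact norm_phase_le hs hs1 hle
            · exact hbound s u hs
        _ = _ := by
            have : 1 + u ^ 2 ≠ 0 := by positivity
            field_simp
    · rw [Set.indicator_of_notMem hu, norm_zero]
      positivity
  · refine Eventually.of_forall fun u => ?_
    refine ((tendsto_phase u).mul (hlim u)).congr' ?_
    have hbig : Tendsto (fun s : ℝ => π / s ^ 3) (𝓝[>] 0) atTop := by
      have h := (tendsto_inv_nhdsGT_zero.comp
        (tendsto_pow_nhdsGT_zero three_ne_zero)).const_mul_atTop Real.pi_pos
      simpa only [Function.comp_def, div_eq_mul_inv] using h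
    filter_upwards [hbig.eventually_gt_atTop |u|] with s hs
    rw [Set.indicator_of_mem]
    have := abs_lt.mp hs
    exact ⟨this.1, this.2.le⟩

/-- The saddle-point integral, with the frequency shifted by `κ`. -/
noncomputable def saddleIntegral (s κ : ℝ) : ℂ :=
  ∫ u in -(π / s ^ 3)..π / s ^ 3, phase s u * Complex.exp ((-κ * (s ^ 3 * u) : ℝ) * Complex.I)

lemma integral_exp_int_mul_I (k : ℤ) :
    ∫ y in -π..π, Complex.exp ((k * y : ℝ) * Complex.I) = if k = 0 then 2 * (π : ℂ) else 0 := by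
  split_ifs with hk
  · simp [hk]
    ring
  · have hc : (k * Complex.I : ℂ) ≠ 0 := by simp [hk]
    have he (y : ℝ) : Complex.exp ((k * y : ℝ) * Complex.I) = Complex.exp (k * Complex.I * y) := by
      congr 1
      push_cast
      ring
    simp_rw [he]
    rw [integral_exp_mul_complex hc, div_eq_zero_iff, sub_eq_zero]
    left
    rw [Complex.exp_eq_exp_iff_exists_int]
    refine ⟨k, ?_⟩
    push_cast
    ring

/-- Cauchy's formula for the coefficients of the partition generating function. -/
lemma integral_generating_function {x : ℝ} (hx : 0 < x) (m : ℕ) :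
    ∫ y in -π..π, (Real.exp (moment 0 x) * Complex.exp (logRatio x y)) *
      Complex.exp ((-m * y : ℝ) * Complex.I) = 2 * π * (p m * Real.exp (-(m * x))) := by
  have hr : Real.exp (-x) < 1 := by rw [Real.exp_lt_one_iff]; linarith
  have hsum := summable_p_mul_pow (Real.exp_pos (-x)).le hr
  have hterm (n : ℕ) (y : ℝ) : (p n : ℂ) * Complex.exp (-x + y * Complex.I) ^ n *
      Complex.exp ((-m * y : ℝ) * Complex.I) =
      (p n * Real.exp (-x) ^ n : ℝ) * Complex.exp ((((n : ℤ) - m : ℤ) * y : ℝ) * Complex.I) := by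
    push_cast
    rw [← Complex.exp_nat_mul, ← Complex.exp_nat_mul, mul_assoc (p n : ℂ), mul_assoc (p n : ℂ),
      ← Complex.exp_add, ← Complex.exp_add]
    congr 2
    ring
  have hnorm (n : ℕ) (y : ℝ) : ‖((p n * Real.exp (-x) ^ n : ℝ) : ℂ) *
      Complex.exp ((((n : ℤ) - m : ℤ) * y : ℝ) * Complex.I)‖ = p n * Real.exp (-x) ^ n := by
    rw [norm_mul, Complex.norm_exp_ofReal_mul_I, mul_one, Complex.norm_real,
      Real.norm_of_nonneg (mul_nonneg (by unfold p; positivity) (by positivity))]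
  have hint := intervalIntegral.hasSum_integral_of_dominated_convergence (a := -π) (b := π)
    (μ := volume)
    (F := fun (n : ℕ) (y : ℝ) => (p n : ℂ) * Complex.exp (-x + y * Complex.I) ^ n *
      Complex.exp ((-m * y : ℝ) * Complex.I))
    (f := fun y : ℝ => (Real.exp (moment 0 x) * Complex.exp (logRatio x y)) *
      Complex.exp ((-m * y : ℝ) * Complex.I))
    (fun n _ => p n * Real.exp (-x) ^ n)
    (fun n => Continuous.aestronglyMeasurable (by fun_prop))
    (fun n => Eventually.of_forall fun y _ => by rw [hterm, hnorm])
    (Eventually.of_forall fun y _ => hsum)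
    intervalIntegrable_const
    (Eventually.of_forall fun y _ => by
      rw [← tsum_p_mul_exp hx y]
      refine HasSum.mul_right _ (Summable.hasSum ?_)
      refine Summable.of_norm_bounded hsum fun n => ?_
      rw [norm_mul, norm_pow, Complex.norm_exp, Complex.norm_real,
        Real.norm_of_nonneg (by unfold p; positivity)]
      simp)
  have hval (n : ℕ) : ∫ y in -π..π, (p n : ℂ) * Complex.exp (-x + y * Complex.I) ^ n *
      Complex.exp ((-m * y : ℝ) * Complex.I) =
      if n = m then 2 * (π : ℂ) * (p m * Real.exp (-(m * x))) else 0 := by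
    simp_rw [hterm]
    rw [intervalIntegral.integral_const_mul, integral_exp_int_mul_I]
    by_cases h : n = m
    · rw [if_pos (by omega), if_pos h, h, ← Real.exp_nat_mul, mul_neg]
      push_cast
      ring
    · rw [if_neg (by omega), if_neg h, mul_zero]
  simp_rw [hval] at hint
  exact hint.unique (hasSum_ite_eq m _)

lemma p_eq_saddleIntegral {s : ℝ} (hs : 0 < s) (m : ℕ) :
    (p m : ℂ) = Real.exp (m * s ^ 2) * (Real.exp (moment 0 (s ^ 2)) * s ^ 3 / (2 * π)) *
      saddleIntegral s (m - π ^ 2 / (6 * s ^ 4)) := by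
  have h := integral_generating_function (pow_pos hs 2) m
  have hs3 : s ^ 3 ≠ 0 := by positivity
  have hcov := intervalIntegral.smul_integral_comp_mul_left (a := -(π / s ^ 3)) (b := π / s ^ 3)
    (fun y : ℝ => (Real.exp (moment 0 (s ^ 2)) * Complex.exp (logRatio (s ^ 2) y)) *
      Complex.exp ((-m * y : ℝ) * Complex.I)) (s ^ 3)
  rw [mul_neg, mul_div_cancel₀ _ hs3, h] at hcov
  have hphase (u : ℝ) : (Real.exp (moment 0 (s ^ 2)) *
      Complex.exp (logRatio (s ^ 2) (s ^ 3 * u))) *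
        Complex.exp ((-m * (s ^ 3 * u) : ℝ) * Complex.I) =
      Real.exp (moment 0 (s ^ 2)) * (phase s u * Complex.exp
        ((-(m - π ^ 2 / (6 * s ^ 4)) * (s ^ 3 * u) : ℝ) * Complex.I)) := by
    rw [phase, ← Complex.exp_add, mul_assoc, ← Complex.exp_add]
    congr 2
    have hsc : (s : ℂ) ≠ 0 := by exact_mod_cast hs.ne'
    push_cast
    field_simp
    ring
  simp_rw [hphase] at hcov
  rw [intervalIntegral.integral_const_mul] at hcov
  change s ^ 3 • (_ * saddleIntegral s (m - π ^ 2 / (6 * s ^ 4))) = _ at hcov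
  rw [Complex.real_smul] at hcov
  have hexp : (Real.exp (m * s ^ 2) : ℂ) * Real.exp (-(m * s ^ 2)) = 1 := by
    rw [← Complex.ofReal_mul, ← Real.exp_add, add_neg_cancel, Real.exp_zero, Complex.ofReal_one]
  have hpi : (π : ℂ) ≠ 0 := by exact_mod_cast Real.pi_ne_zero
  calc (p m : ℂ) = Real.exp (m * s ^ 2) * (2 * π * (p m * Real.exp (-(m * s ^ 2)))) / (2 * π) := by
        field_simp
        linear_combination (-(p m : ℂ)) * hexp
    _ = _ := by
        rw [← hcov]
        push_cast
        ring

end SaddlePoint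

section SaddleLimits

lemma integral_mul_gaussian {b : ℝ} : ∫ u : ℝ, u * Real.exp (-b * u ^ 2) = 0 := by
  have h := integral_neg_eq_self (fun u : ℝ => u * Real.exp (-b * u ^ 2)) volume
  simp only [neg_mul, even_two, Even.neg_pow, integral_neg] at h ⊢
  linarith

lemma integral_sq_mul_gaussian {b : ℝ} (hb : 0 < b) :
    ∫ u : ℝ, u ^ 2 * Real.exp (-b * u ^ 2) = (∫ u : ℝ, Real.exp (-b * u ^ 2)) / (2 * b) := by
  have h2 : Integrable fun u : ℝ => u ^ 2 * Real.exp (-b * u ^ 2) := by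
    simpa using integrable_rpow_mul_exp_neg_mul_sq hb (s := 2) (by norm_num)
  have h1 := integrable_mul_exp_neg_mul_sq hb
  have h0 := integrable_exp_neg_mul_sq hb
  have hder (u : ℝ) : HasDerivAt (fun u : ℝ => u * Real.exp (-b * u ^ 2))
      (Real.exp (-b * u ^ 2) - 2 * b * (u ^ 2 * Real.exp (-b * u ^ 2))) u := by
    have h := (hasDerivAt_id u).mul (((hasDerivAt_pow 2 u).const_mul (-b)).exp)
    refine h.congr_deriv ?_
    simp only [id]
    push_cast
    ring
  have h := integral_eq_zero_of_hasDerivAt_of_integrable hder (h0.sub (h2.const_mul _)) h1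
  rw [integral_sub h0 (h2.const_mul _), integral_const_mul] at h
  rw [eq_div_iff (by positivity)]
  linarith

/-- The Gaussian mass in the saddle-point approximation. -/
noncomputable def gaussianMass : ℝ := ∫ u : ℝ, Real.exp (-(π ^ 2 / 6) * u ^ 2)

lemma gaussianMass_pos : 0 < gaussianMass := by
  rw [gaussianMass, integral_gaussian]
  positivity

lemma tendsto_saddleIntegral_zero :
    Tendsto (fun s => saddleIntegral s 0) (𝓝[>] 0) (𝓝 (gaussianMass : ℂ)) := by
  have h := tendsto_integral_phase_mul (g := fun _ _ => 1) (g₀ := fun _ => 1)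
    (fun _ => continuous_const) (fun _ u _ => by rw [norm_one]; nlinarith [sq_nonneg u])
    (fun _ => tendsto_const_nhds)
  simp only [mul_one] at h
  rw [integral_complex_ofReal] at h
  simpa [saddleIntegral, gaussianMass] using h

lemma intervalIntegrable_phase_mul_exp {s : ℝ} (hs : 0 < s) (κ a b : ℝ) :
    IntervalIntegrable
      (fun u => phase s u * Complex.exp ((-κ * (s ^ 3 * u) : ℝ) * Complex.I)) volume a b := by
  have := continuous_phase hs
  exact Continuous.intervalIntegrable (by fun_prop) a b

lemma tendsto_exp_mul_I_sub_one_div (c : ℝ) :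
    Tendsto (fun s : ℝ => (Complex.exp ((c * s ^ 3 : ℝ) * Complex.I) - 1) / (s : ℂ) ^ 3) (𝓝[>] 0)
      (𝓝 (c * Complex.I)) := by
  have hd : HasDerivAt (fun t : ℝ => Complex.exp ((c * t : ℝ) * Complex.I)) (c * Complex.I) 0 := by
    have h1 : HasDerivAt (fun t : ℝ => ((c * t : ℝ) : ℂ) * Complex.I) (c * Complex.I) 0 := by
      have := (((hasDerivAt_id (0 : ℝ)).const_mul c).ofReal_comp).mul_const Complex.I
      simpa using this
    have := h1.cexp
    simpa using this
  have h := (hasDerivAt_iff_tendsto_slope_zero.mp hd).comp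
    ((tendsto_pow_nhdsGT_zero three_ne_zero).mono_right (nhdsGT_le_nhdsNE 0))
  refine h.congr fun s => ?_
  simp [Complex.real_smul, div_eq_inv_mul]

lemma norm_exp_mul_I_sub_one_div_le {s : ℝ} (hs : 0 < s) (c : ℝ) :
    ‖(Complex.exp ((c * s ^ 3 : ℝ) * Complex.I) - 1) / (s : ℂ) ^ 3‖ ≤ |c| := by
  have hs3 := pow_pos hs 3
  rw [norm_div, norm_pow, Complex.norm_real, Real.norm_of_nonneg hs.le, div_le_iff₀ hs3]
  refine (norm_exp_mul_I_sub_one_le _).trans_eq ?_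
  rw [abs_mul, abs_of_pos hs3]

lemma tendsto_saddleIntegral_sub {κ : ℝ} (hκ : |κ| = 1) :
    Tendsto (fun s : ℝ => (saddleIntegral s κ - saddleIntegral s 0) / (s : ℂ) ^ 3) (𝓝[>] 0)
      (𝓝 0) := by
  have h := tendsto_integral_phase_mul
    (g := fun s u => (Complex.exp ((-κ * u * s ^ 3 : ℝ) * Complex.I) - 1) / (s : ℂ) ^ 3)
    (g₀ := fun u => (-κ * u : ℝ) * Complex.I)
    (fun _ => by fun_prop)
    (fun s u hs => by
      refine (norm_exp_mul_I_sub_one_div_le hs _).trans ?_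
      rw [abs_mul, abs_neg, hκ, one_mul]
      nlinarith [sq_abs u, sq_nonneg (|u| - 1)])
    (fun u => tendsto_exp_mul_I_sub_one_div (-κ * u))
  have hzero : ∫ u : ℝ, (Real.exp (-(π ^ 2 / 6) * u ^ 2) : ℂ) * ((-κ * u : ℝ) * Complex.I) = 0 := by
    have he (u : ℝ) : (Real.exp (-(π ^ 2 / 6) * u ^ 2) : ℂ) * ((-κ * u : ℝ) * Complex.I) =
        (-κ * Complex.I) * ((u * Real.exp (-(π ^ 2 / 6) * u ^ 2) : ℝ) : ℂ) := by
      push_cast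
      ring
    simp_rw [he]
    rw [integral_const_mul, integral_complex_ofReal, integral_mul_gaussian]
    simp
  rw [hzero] at h
  refine h.congr' ?_
  filter_upwards [self_mem_nhdsWithin] with s (hs : 0 < s)
  rw [saddleIntegral, saddleIntegral, ← intervalIntegral.integral_sub
    (intervalIntegrable_phase_mul_exp hs _ _ _) (intervalIntegrable_phase_mul_exp hs _ _ _),
    ← intervalIntegral.integral_div]
  refine intervalIntegral.integral_congr fun u _ => ?_
  simp only [neg_zero, zero_mul, Complex.ofReal_zero, Complex.exp_zero, mul_one]
  rw [show -κ * (s ^ 3 * u) = -κ * u * s ^ 3 by ring]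
  ring

lemma tendsto_saddleIntegral_second_difference :
    Tendsto (fun s : ℝ => (saddleIntegral s 1 + saddleIntegral s (-1) - 2 * saddleIntegral s 0) /
      (s : ℂ) ^ 6) (𝓝[>] 0) (𝓝 ((-(3 / π ^ 2) * gaussianMass : ℝ) : ℂ)) := by
  have h := tendsto_integral_phase_mul
    (g := fun s u => ((Complex.exp ((u * s ^ 3 : ℝ) * Complex.I) - 1) / (s : ℂ) ^ 3) ^ 2 *
      Complex.exp ((-(u * s ^ 3) : ℝ) * Complex.I))
    (g₀ := fun u => ((u : ℂ) * Complex.I) ^ 2 * Complex.exp ((-(u * 0 ^ 3) : ℝ) * Complex.I))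
    (fun _ => by fun_prop)
    (fun s u hs => by
      rw [norm_mul, norm_pow, Complex.norm_exp_ofReal_mul_I, mul_one]
      calc _ ≤ |u| ^ 2 := by gcongr; exact norm_exp_mul_I_sub_one_div_le hs u
        _ ≤ _ := by rw [sq_abs]; linarith)
    (fun u => by
      refine ((tendsto_exp_mul_I_sub_one_div u).pow 2).mul ?_
      have hc : Continuous fun s : ℝ => Complex.exp ((-(u * s ^ 3) : ℝ) * Complex.I) := by
        fun_prop
      exact (hc.tendsto 0).mono_left nhdsWithin_le_nhds)
  have hval : ∫ u : ℝ, (Real.exp (-(π ^ 2 / 6) * u ^ 2) : ℂ) *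
      (((u : ℂ) * Complex.I) ^ 2 * Complex.exp ((-(u * 0 ^ 3) : ℝ) * Complex.I)) =
      (-(3 / π ^ 2) * gaussianMass : ℝ) := by
    have he (u : ℝ) : (Real.exp (-(π ^ 2 / 6) * u ^ 2) : ℂ) *
        (((u : ℂ) * Complex.I) ^ 2 * Complex.exp ((-(u * 0 ^ 3) : ℝ) * Complex.I)) =
        ((-(u ^ 2 * Real.exp (-(π ^ 2 / 6) * u ^ 2)) : ℝ) : ℂ) := by
      rw [mul_pow, Complex.I_sq]
      simp
      ring
    simp_rw [he]
    rw [integral_complex_ofReal, integral_neg, integral_sq_mul_gaussian (by positivity),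
      ← gaussianMass]
    congr 1
    field_simp
    ring
  rw [hval] at h
  refine h.congr' ?_
  filter_upwards [self_mem_nhdsWithin] with s (hs : 0 < s)
  rw [saddleIntegral, saddleIntegral, saddleIntegral, ← intervalIntegral.integral_const_mul,
    ← intervalIntegral.integral_add
    (intervalIntegrable_phase_mul_exp hs _ _ _) (intervalIntegrable_phase_mul_exp hs _ _ _),
    ← intervalIntegral.integral_sub
    ((intervalIntegrable_phase_mul_exp hs _ _ _).add (intervalIntegrable_phase_mul_exp hs _ _ _))
    ((intervalIntegrable_phase_mul_exp hs _ _ _).const_mul 2), ← intervalIntegral.integral_div]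
  refine intervalIntegral.integral_congr fun u _ => ?_
  simp only [neg_zero, zero_mul, Complex.ofReal_zero, Complex.exp_zero, mul_one, neg_neg, one_mul]
  have hinv : Complex.exp ((u * s ^ 3 : ℝ) * Complex.I) *
      Complex.exp ((-(u * s ^ 3) : ℝ) * Complex.I) = 1 := by
    rw [← Complex.exp_add, ← Complex.exp_zero]
    congr 1
    push_cast
    ring
  rw [show -1 * (s ^ 3 * u) = -(u * s ^ 3) by ring, show s ^ 3 * u = u * s ^ 3 by ring]
  have hsc : (s : ℂ) ≠ 0 := by exact_mod_cast hs.ne'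
  generalize Complex.exp ((u * s ^ 3 : ℝ) * Complex.I) = z at *
  generalize Complex.exp ((-(u * s ^ 3) : ℝ) * Complex.I) = w at *
  field_simp
  linear_combination phase s u * (z - 2) * hinv

lemma tendsto_saddleIntegral_ratio {κ : ℝ} (hκ : |κ| = 1) :
    Tendsto (fun s : ℝ => (saddleIntegral s κ / saddleIntegral s 0 - 1) / (s : ℂ) ^ 3) (𝓝[>] 0)
      (𝓝 0) := by
  have hG : (gaussianMass : ℂ) ≠ 0 := by exact_mod_cast gaussianMass_pos.ne'
  have h := (tendsto_saddleIntegral_sub hκ).div tendsto_saddleIntegral_zero hG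
  rw [zero_div] at h
  refine h.congr' ?_
  filter_upwards [self_mem_nhdsWithin, tendsto_saddleIntegral_zero.eventually_ne hG]
    with s (hs : 0 < s) h0
  have hsc : (s : ℂ) ≠ 0 := by exact_mod_cast hs.ne'
  simp only [Pi.div_apply]
  field_simp

lemma tendsto_saddleIntegral_mul_ratio :
    Tendsto (fun s : ℝ => (saddleIntegral s 1 * saddleIntegral s (-1) / saddleIntegral s 0 ^ 2 - 1) /
      (s : ℂ) ^ 6) (𝓝[>] 0) (𝓝 ((-(3 / π ^ 2) : ℝ) : ℂ)) := by
  have hG : (gaussianMass : ℂ) ≠ 0 := by exact_mod_cast gaussianMass_pos.ne'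
  have h := (tendsto_saddleIntegral_second_difference.div tendsto_saddleIntegral_zero hG).add
    ((tendsto_saddleIntegral_ratio (κ := 1) (by simp)).mul
      (tendsto_saddleIntegral_ratio (κ := -1) (by simp)))
  rw [mul_zero, add_zero, Complex.ofReal_mul, mul_div_assoc, div_self hG, mul_one] at h
  refine h.congr' ?_
  filter_upwards [self_mem_nhdsWithin, tendsto_saddleIntegral_zero.eventually_ne hG]
    with s (hs : 0 < s) h0
  have hsc : (s : ℂ) ≠ 0 := by exact_mod_cast hs.ne'
  simp only [Pi.div_apply]
  field_simp
  ring

end SaddleLimits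

section Asymptotics

lemma p_pos (n : ℕ) : 0 < p n := by
  unfold p
  exact_mod_cast Fintype.card_pos

/-- The scale `s` for which `n` is the saddle point. -/
noncomputable def saddleScale (n : ℕ) : ℝ := √(π / √(6 * n))

lemma saddleScale_pos {n : ℕ} (hn : 0 < n) : 0 < saddleScale n := by
  unfold saddleScale
  positivity

lemma saddleScale_sq (n : ℕ) : saddleScale n ^ 2 = π / (√6 * √n) := by
  rw [saddleScale, Real.sq_sqrt (by positivity), Real.sqrt_mul (by norm_num)]

lemma saddle_point_eq {n : ℕ} (hn : 0 < n) : π ^ 2 / (6 * saddleScale n ^ 4) = n := by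
  have h : saddleScale n ^ 4 = π ^ 2 / (6 * n) := by
    rw [show saddleScale n ^ 4 = (saddleScale n ^ 2) ^ 2 by ring, saddleScale_sq, div_pow, mul_pow,
      Real.sq_sqrt (by norm_num), Real.sq_sqrt (by positivity)]
  rw [h]
  have : (0 : ℝ) < n := by exact_mod_cast hn
  field_simp

lemma tendsto_saddleScale : Tendsto saddleScale atTop (𝓝[>] 0) := by
  refine tendsto_nhdsWithin_iff.mpr ⟨?_, ?_⟩
  · have h : Tendsto (fun n : ℕ => π / √(6 * n)) atTop (𝓝 0) :=
      tendsto_const_nhds.div_atTop (Real.tendsto_sqrt_atTop.comp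
        (tendsto_natCast_atTop_atTop.const_mul_atTop (by norm_num)))
    have := (Real.continuous_sqrt.tendsto 0).comp h
    rwa [Real.sqrt_zero] at this
  · filter_upwards [eventually_gt_atTop 0] with n hn using saddleScale_pos hn

lemma p_ratio_eq {n m : ℕ} (hn : 0 < n) :
    ((p m / p n * Real.exp (-(((m : ℝ) - n) * saddleScale n ^ 2)) : ℝ) : ℂ) =
      saddleIntegral (saddleScale n) (m - n) / saddleIntegral (saddleScale n) 0 := by
  have hs := saddleScale_pos hn
  have h1 := p_eq_saddleIntegral hs m
  have h2 := p_eq_saddleIntegral hs n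
  rw [saddle_point_eq hn] at h1 h2
  rw [sub_self] at h2
  have hp : (p n : ℂ) ≠ 0 := by exact_mod_cast (p_pos n).ne'
  have h0 : saddleIntegral (saddleScale n) 0 ≠ 0 := by
    intro h
    rw [h, mul_zero] at h2
    exact hp h2
  have hexp : (Real.exp (m * saddleScale n ^ 2) : ℂ) *
      Real.exp (-(((m : ℝ) - n) * saddleScale n ^ 2)) = Real.exp (n * saddleScale n ^ 2) := by
    rw [← Complex.ofReal_mul, ← Real.exp_add]
    congr 2
    ring
  rw [Complex.ofReal_mul, Complex.ofReal_div, div_mul_eq_mul_div, div_eq_div_iff hp h0]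
  set c : ℂ := Real.exp (moment 0 (saddleScale n ^ 2)) * saddleScale n ^ 3 / (2 * π)
  rw [h1, h2]
  linear_combination c * saddleIntegral (saddleScale n) (m - n) *
    saddleIntegral (saddleScale n) 0 * hexp

lemma tendsto_log_div {α : Type*} {l : Filter α} {r w : α → ℝ} {a : ℝ} (hw : ∀ᶠ i in l, 0 < w i)
    (hw0 : Tendsto w l (𝓝 0)) (h : Tendsto (fun i => (r i - 1) / w i) l (𝓝 a)) :
    Tendsto (fun i => Real.log (r i) / w i) l (𝓝 a) := by
  have hr : Tendsto r l (𝓝 1) := by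
    have h1 := (h.mul hw0).add_const 1
    rw [mul_zero, zero_add] at h1
    refine h1.congr' ?_
    filter_upwards [hw] with i hi
    field_simp
    ring
  have hlow : Tendsto (fun i => (r i - 1) / w i / r i) l (𝓝 a) := by
    have h1 := h.div hr one_ne_zero
    rwa [div_one] at h1
  refine tendsto_of_tendsto_of_tendsto_of_le_of_le' hlow h ?_ ?_
  · filter_upwards [hw, hr.eventually_const_lt zero_lt_one] with i hi hri
    rw [div_right_comm]
    gcongr
    have := Real.one_sub_inv_le_log_of_pos hri
    rwa [sub_div, div_self hri.ne', one_div]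
  · filter_upwards [hw, hr.eventually_const_lt zero_lt_one] with i hi hri
    gcongr
    exact Real.log_le_sub_one_of_pos hri

/-- The logarithm of the partition function. -/
noncomputable def logp (n : ℕ) : ℝ := Real.log (p n)

lemma eventually_saddleScale_pow_pos (k : ℕ) : ∀ᶠ n : ℕ in atTop, 0 < saddleScale n ^ k := by
  filter_upwards [eventually_gt_atTop 0] with n hn using pow_pos (saddleScale_pos hn) k

lemma tendsto_saddleScale_pow {k : ℕ} (hk : k ≠ 0) :
    Tendsto (fun n => saddleScale n ^ k) atTop (𝓝 0) :=
  tendsto_nhds_of_tendsto_nhdsWithin ((tendsto_pow_nhdsGT_zero hk).comp tendsto_saddleScale)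

lemma tendsto_sqrt_mul_logp_sub :
    Tendsto (fun n : ℕ => √n * (logp (n + 1) - logp n)) atTop (𝓝 (π / √6)) := by
  have h := (tendsto_saddleIntegral_ratio (κ := 1) (by simp)).comp tendsto_saddleScale
  have hre : Tendsto (fun n : ℕ => (p (n + 1) / p n * Real.exp (-saddleScale n ^ 2) - 1) /
      saddleScale n ^ 3) atTop (𝓝 0) := by
    refine (((Complex.continuous_re.tendsto 0).comp h).congr' ?_)
    filter_upwards [eventually_gt_atTop 0] with n hn
    have he := p_ratio_eq (m := n + 1) hn
    rw [Nat.cast_add_one, add_sub_cancel_left, one_mul] at he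
    simp only [Function.comp_apply]
    rw [← he, ← Complex.ofReal_pow, ← Complex.ofReal_one, ← Complex.ofReal_sub,
      ← Complex.ofReal_div, Complex.ofReal_re]
  have hlog := tendsto_log_div (eventually_saddleScale_pow_pos 3)
    (tendsto_saddleScale_pow three_ne_zero) hre
  have hs := tendsto_saddleScale_pow one_ne_zero
  have h1 := ((hlog.mul hs).add_const 1).const_mul (π / √6)
  rw [mul_zero, zero_add, mul_one] at h1
  refine h1.congr' ?_
  filter_upwards [eventually_gt_atTop 0] with n hn
  have hp := p_pos n
  have hp1 := p_pos (n + 1)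
  have hs := saddleScale_pos hn
  have hn0 : (0 : ℝ) < n := by exact_mod_cast hn
  rw [Real.log_mul (by positivity) (by positivity), Real.log_div hp1.ne' hp.ne', Real.log_exp,
    ← logp, ← logp]
  have hsq : √(n : ℝ) = π / √6 / saddleScale n ^ 2 := by
    rw [saddleScale_sq]
    field_simp
  rw [hsq]
  field_simp
  ring

lemma tendsto_cube_sqrt_mul_logp_second_difference :
    Tendsto (fun n : ℕ => √n ^ 3 * (logp (n + 1) + logp (n - 1) - 2 * logp n)) atTop
      (𝓝 (-(π / √6) / 2)) := by
  have h := tendsto_saddleIntegral_mul_ratio.comp tendsto_saddleScale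
  have hre : Tendsto (fun n : ℕ => (p (n + 1) * p (n - 1) / p n ^ 2 - 1) /
      saddleScale n ^ 6) atTop (𝓝 (-(3 / π ^ 2))) := by
    refine (((Complex.continuous_re.tendsto _).comp h).congr' ?_)
    filter_upwards [eventually_gt_atTop 0] with n hn
    have he1 := p_ratio_eq (m := n + 1) hn
    have he2 := p_ratio_eq (m := n - 1) hn
    rw [Nat.cast_add_one, add_sub_cancel_left, one_mul] at he1
    rw [Nat.cast_pred hn, show (n : ℝ) - 1 - n = -1 by ring, neg_one_mul, neg_neg] at he2
    have he : saddleIntegral (saddleScale n) 1 * saddleIntegral (saddleScale n) (-1) /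
        saddleIntegral (saddleScale n) 0 ^ 2 = (p (n + 1) * p (n - 1) / p n ^ 2 : ℝ) := by
      rw [sq, mul_div_mul_comm, ← he1, ← he2, ← Complex.ofReal_mul, mul_mul_mul_comm,
        ← Real.exp_add, neg_add_cancel, Real.exp_zero, mul_one, div_mul_div_comm, ← sq]
    simp only [Function.comp_apply]
    rw [he, ← Complex.ofReal_pow, ← Complex.ofReal_one, ← Complex.ofReal_sub,
      ← Complex.ofReal_div, Complex.ofReal_re]
  have hlog := tendsto_log_div (eventually_saddleScale_pow_pos 6)
    (tendsto_saddleScale_pow (by norm_num)) hre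
  have h1 := hlog.const_mul ((π / √6) ^ 3)
  have h6 : √6 ^ 2 = (6 : ℝ) := Real.sq_sqrt (by norm_num)
  have hval : (π / √6) ^ 3 * -(3 / π ^ 2) = -(π / √6) / 2 := by
    rw [show (π / √6) ^ 3 = π ^ 3 / (√6 ^ 2 * √6) by field_simp, h6]
    field_simp
    norm_num
  rw [hval] at h1
  refine h1.congr' ?_
  filter_upwards [eventually_gt_atTop 0] with n hn
  have hp := p_pos n
  have hp1 := p_pos (n + 1)
  have hp2 := p_pos (n - 1)
  have hs := saddleScale_pos hn
  have hn0 : (0 : ℝ) < n := by exact_mod_cast hn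
  rw [Real.log_div (by positivity) (by positivity), Real.log_mul hp1.ne' hp2.ne', Real.log_pow,
    ← logp, ← logp, ← logp]
  have hsq : √(n : ℝ) = π / √6 / saddleScale n ^ 2 := by
    rw [saddleScale_sq]
    field_simp
  rw [hsq]
  push_cast
  field_simp

lemma tendsto_sqrt_mul_sqrt_succ_sub :
    Tendsto (fun n : ℕ => √n * (√((n + 1 : ℕ) : ℝ) - √n)) atTop (𝓝 (1 / 2)) := by
  have h : Tendsto (fun n : ℕ => 1 / (√(1 + 1 / (n : ℝ)) + 1)) atTop (𝓝 (1 / (√(1 + 0) + 1))) := by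
    refine Tendsto.div tendsto_const_nhds ?_ (by positivity)
    refine Tendsto.add_const 1 ((Real.continuous_sqrt.tendsto _).comp ?_)
    exact (tendsto_one_div_atTop_nhds_zero_nat).const_add 1
  rw [add_zero, Real.sqrt_one, one_add_one_eq_two] at h
  refine h.congr' ?_
  filter_upwards [eventually_gt_atTop 0] with n hn
  have hn0 : (0 : ℝ) < n := by exact_mod_cast hn
  have h1 : √(1 + 1 / (n : ℝ)) = √((n + 1 : ℕ) : ℝ) / √n := by
    rw [← Real.sqrt_div (by positivity)]
    congr 1
    push_cast
    field_simp
  have ha : √(n : ℝ) ^ 2 = n := Real.sq_sqrt hn0.le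
  have hb : √((n + 1 : ℕ) : ℝ) ^ 2 = n + 1 := by
    rw [Real.sq_sqrt (by positivity)]
    push_cast
    ring
  rw [h1]
  have hs : 0 < √(n : ℝ) := by positivity
  have ht : 0 ≤ √((n + 1 : ℕ) : ℝ) := by positivity
  generalize √((n + 1 : ℕ) : ℝ) = t at *
  generalize √(n : ℝ) = s at *
  field_simp
  linarith

/-- The Hardy–Ramanujan asymptotics at the level of logarithms. -/
lemma tendsto_logp_div_sqrt :
    Tendsto (fun n : ℕ => logp n / √n) atTop (𝓝 (2 * (π / √6))) := by
  have hmono (n : ℕ) : 0 < √((n + 1 : ℕ) : ℝ) - √n :=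
    sub_pos.mpr (Real.sqrt_lt_sqrt (by positivity) (by push_cast; linarith))
  have hquot := (tendsto_sqrt_mul_logp_sub.div tendsto_sqrt_mul_sqrt_succ_sub (by norm_num)).sub_const
    (2 * (π / √6))
  rw [show π / √6 / (1 / 2) - 2 * (π / √6) = 0 by ring] at hquot
  have hlittle : (fun n : ℕ => logp (n + 1) - logp n - 2 * (π / √6) *
      (√((n + 1 : ℕ) : ℝ) - √n)) =o[atTop] fun n : ℕ => √((n + 1 : ℕ) : ℝ) - √n := by
    rw [Asymptotics.isLittleO_iff_tendsto fun n hn => absurd hn (hmono n).ne']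
    refine hquot.congr' ?_
    filter_upwards [eventually_gt_atTop 0] with n hn
    have hn0 : (0 : ℝ) < n := by exact_mod_cast hn
    have := (hmono n).ne'
    simp only [Pi.div_apply]
    field_simp
  have hsum (n : ℕ) : ∑ i ∈ Finset.range n, (√((i + 1 : ℕ) : ℝ) - √i) = √n := by
    rw [Finset.sum_range_sub (fun i : ℕ => √(i : ℝ))]
    simp
  have hbig : Tendsto (fun n : ℕ => √(n : ℝ)) atTop atTop :=
    Real.tendsto_sqrt_atTop.comp tendsto_natCast_atTop_atTop
  have h := hlittle.sum_range (fun n => (hmono n).le) (by simpa only [hsum] using hbig)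
  simp only [Finset.sum_sub_distrib, ← Finset.mul_sum] at h
  simp only [← Finset.sum_sub_distrib, hsum, Finset.sum_range_sub] at h
  have h1 := h.tendsto_div_nhds_zero
  have h2 := (h1.add_const (2 * (π / √6))).add
    (tendsto_const_nhds (x := logp 0).div_atTop hbig)
  rw [zero_add, add_zero] at h2
  refine h2.congr' ?_
  filter_upwards [eventually_gt_atTop 0] with n hn
  have hn0 : (0 : ℝ) < n := by exact_mod_cast hn
  field_simp
  ring

/-- The second difference of `log p(n) / n` is asymptotic to `3π / (√24 n^{5/2})`. -/
lemma tendsto_logp_div_second_difference :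
    Tendsto (fun n : ℕ => √n ^ 5 * (logp (n + 1) / ((n : ℝ) + 1) + logp (n - 1) / ((n : ℝ) - 1) -
      2 * (logp n / n))) atTop (𝓝 (3 / 2 * (π / √6))) := by
  have hinv := tendsto_one_div_atTop_nhds_zero_nat (𝕜 := ℝ)
  have hden : Tendsto (fun n : ℕ => 1 - (1 / (n : ℝ)) ^ 2) atTop (𝓝 1) := by
    simpa using (hinv.pow 2).const_sub 1
  have hsec := tendsto_cube_sqrt_mul_logp_second_difference
  have h := ((tendsto_logp_div_sqrt.const_mul 2).add
    ((hsec.mul (hinv.const_sub 1)).sub ((tendsto_sqrt_mul_logp_sub.sub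
      (hsec.mul hinv)).const_mul 2))).div hden one_ne_zero
  have hval : (2 * (2 * (π / √6)) + (-(π / √6) / 2 * (1 - 0) -
      2 * (π / √6 - -(π / √6) / 2 * 0))) / 1 = 3 / 2 * (π / √6) := by ring
  rw [hval] at h
  refine h.congr' ?_
  filter_upwards [eventually_gt_atTop 1] with n hn
  have hn1 : (1 : ℝ) < n := by exact_mod_cast hn
  have hs : 0 < √(n : ℝ) := by positivity
  have hs2 : (n : ℝ) = √(n : ℝ) ^ 2 := (Real.sq_sqrt (by positivity)).symm
  simp only [Pi.div_apply]
  generalize √(n : ℝ) = s at *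
  rw [hs2] at hn1 ⊢
  have h1 : s ^ 2 - 1 ≠ 0 := by linarith
  have h2 : s ^ 2 + 1 ≠ 0 := by positivity
  rw [show 1 - (1 / s ^ 2) ^ 2 = (s ^ 2 - 1) * (s ^ 2 + 1) / s ^ 4 by field_simp; ring]
  field_simp
  ring

end Asymptotics

theorem nth_root_p_ratio_constant_best_possible (β : ℝ) (hβ₀ : 0 < β)
    (hβ : β < 3 * π / Real.sqrt 24) :
    ∃ N : ℕ, ∀ n : ℕ, N < n →
      p n ^ ((1 : ℝ) / (n : ℝ)) / p (n + 1) ^ ((1 : ℝ) / ((n : ℝ) + 1)) *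
          (1 + β / (n : ℝ) ^ ((5 : ℝ) / 2)) <
        p (n - 1) ^ ((1 : ℝ) / ((n : ℝ) - 1)) / p n ^ ((1 : ℝ) / (n : ℝ)) := by
  have h24 : 3 * π / √24 = 3 / 2 * (π / √6) := by
    rw [show (24 : ℝ) = 2 ^ 2 * 6 by norm_num, Real.sqrt_mul (by positivity),
      Real.sqrt_sq (by norm_num)]
    field_simp
  rw [h24] at hβ
  obtain ⟨N, hN⟩ := eventually_atTop.mp
    (tendsto_logp_div_second_difference.eventually_const_lt hβ)
  refine ⟨N, fun n hn => ?_⟩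
  have h := hN n hn.le
  have hn0 : (0 : ℝ) < n := by exact_mod_cast (Nat.zero_le N).trans_lt hn
  have hpow : (n : ℝ) ^ ((5 : ℝ) / 2) = √n ^ 5 := by
    rw [Real.sqrt_eq_rpow, ← Real.rpow_natCast, ← Real.rpow_mul hn0.le]
    norm_num
  have hs5 : 0 < √(n : ℝ) ^ 5 := by positivity
  rw [mul_comm, ← div_lt_iff₀ hs5] at h
  have hroot (m : ℕ) (t : ℝ) : p m ^ (1 / t) = Real.exp (logp m / t) := by
    rw [Real.rpow_def_of_pos (p_pos m), logp, mul_one_div]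
  rw [hpow, hroot, hroot, hroot, ← Real.exp_sub, ← Real.exp_sub]
  calc _ ≤ Real.exp (logp n / n - logp (n + 1) / (n + 1)) * Real.exp (β / √n ^ 5) := by
        gcongr
        rw [add_comm]
        exact Real.add_one_le_exp _
    _ = Real.exp (logp n / n - logp (n + 1) / (n + 1) + β / √n ^ 5) := (Real.exp_add _ _).symm
    _ < _ := Real.exp_lt_exp.mpr (by linarith)
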